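/- arXiv:math/0310364 — 4 statements merged into one kernel-verified Lean document; each statement's English description precedes it below -/
import Mathlib

section
/- Let ℓ > 0 and let s be a complex number with Re(s) > 1/2. Then (2s−1) ∫₁^{e^ℓ} ∫₀^∞ [ ∑_{m∈ℤ, m≠0} g_s( ((x − e^{mℓ}x)² + (y + e^{mℓ}y)²)/(4 e^{mℓ} y²) ) − ∑_{m∈ℤ} g_s( ((x + e^{mℓ}x)² + (y + e^{mℓ}y)²)/(4 e^{mℓ} y²) ) ] y^{-2} dx dy = −ℓ/4 + ∑_{k=0}^∞ 2ℓ e^{−(s+2k+1)ℓ}/(1 − e^{−(s+2k+1)ℓ}), the right-hand side being the logarithmic derivative Z_F'(s)/Z_F(s) of the funnel zeta function. (This is Proposition 2.3 of the paper, the formula Φ_F(s) = Z_F'(s)/Z_F(s) for the regularized resolvent trace of the Dirichlet Laplacian on a hyperbolic funnel, written out via the method of images.) -/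
open MeasureTheory

/-- The Green's function of the resolvent `(Δ_ℍ - s(1-s))⁻¹` on the hyperbolic plane,
expressed in the point-pair invariant `σ = cosh²(d(z,z')/2)`, via Euler's integral
representation: `g_s(σ) = (1/(4π)) ∫₀¹ t^(s-1) (1-t)^(s-1) (σ-t)^(-s) dt`. -/
noncomputable def greenH (s : ℂ) (σ : ℝ) : ℂ :=
  (1 / (4 * (Real.pi : ℂ))) * ∫ t in Set.Ioo (0:ℝ) 1,
    (t : ℂ) ^ (s - 1) * ((1 : ℂ) - (t : ℂ)) ^ (s - 1) * ((σ : ℂ) - (t : ℂ)) ^ (-s)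


/-- Beta integrand integrable on the open interval. -/
lemma beta_integrableOn {u v : ℂ} (hu : 0 < u.re) (hv : 0 < v.re) :
    IntegrableOn (fun t : ℝ => (t : ℂ) ^ (u - 1) * (1 - (t : ℂ)) ^ (v - 1)) (Set.Ioo 0 1) := by
  have := Complex.betaIntegral_convergent hu hv
  rw [intervalIntegrable_iff_integrableOn_Ioo_of_le zero_le_one] at this
  exact this

lemma beta_eq_setIntegral (u v : ℂ) :
    ∫ t in Set.Ioo (0:ℝ) 1, (t : ℂ) ^ (u - 1) * (1 - (t : ℂ)) ^ (v - 1) = Complex.betaIntegral u v := by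
  rw [Complex.betaIntegral, intervalIntegral.integral_of_le zero_le_one, integral_Ioc_eq_integral_Ioo]

lemma cpow_half (x : ℝ) (hx : 0 < x) : ((√x : ℝ) : ℂ) = (x : ℂ) ^ (1/2 : ℂ) := by
  rw [Real.sqrt_eq_rpow, Complex.ofReal_cpow hx.le]; norm_num

section lemA

lemma subA_image {c : ℝ} (hc : 0 < c) :
    (fun t : ℝ => √(c * (t⁻¹ - 1))) '' Set.Ioo 0 1 = Set.Ioi 0 := by
  ext v
  simp only [Set.mem_image, Set.mem_Ioo, Set.mem_Ioi]
  constructor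
  · rintro ⟨t, ⟨h0, h1⟩, rfl⟩
    have : 1 < t⁻¹ := (one_lt_inv₀ h0).2 h1
    apply Real.sqrt_pos.2
    apply mul_pos hc; linarith
  · intro hv
    refine ⟨c / (c + v ^ 2), ⟨by positivity, ?_⟩, ?_⟩
    · rw [div_lt_one (by positivity)]; nlinarith
    · rw [Real.sqrt_eq_iff_mul_self_eq_of_pos hv]; field_simp; ring

lemma subA_inj {c : ℝ} (hc : 0 < c) :
    Set.InjOn (fun t : ℝ => √(c * (t⁻¹ - 1))) (Set.Ioo 0 1) := by
  intro x hx y hy h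
  have h1 : 1 < x⁻¹ := (one_lt_inv₀ hx.1).2 hx.2
  have h2 : 1 < y⁻¹ := (one_lt_inv₀ hy.1).2 hy.2
  have h3 := (Real.sqrt_inj (by nlinarith) (by nlinarith)).1 h
  have h4 := mul_left_cancel₀ hc.ne' h3
  exact inv_injective (by linarith)

lemma subA_deriv {c : ℝ} (hc : 0 < c) (t : ℝ) (ht : t ∈ Set.Ioo (0:ℝ) 1) :
    HasDerivWithinAt (fun t : ℝ => √(c * (t⁻¹ - 1)))
      (c * (-(t ^ 2)⁻¹) / (2 * √(c * (t⁻¹ - 1)))) (Set.Ioo 0 1) t := by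
  have h1 : 1 < t⁻¹ := (one_lt_inv₀ ht.1).2 ht.2
  have := (((hasDerivAt_inv ht.1.ne').sub_const 1).const_mul c).sqrt
    (by apply ne_of_gt; apply mul_pos hc; linarith)
  exact this.hasDerivWithinAt

lemma subA_eq {c : ℝ} (hc : 0 < c) (s : ℂ) (t : ℝ) (ht : t ∈ Set.Ioo (0:ℝ) 1) :
    |c * (-(t ^ 2)⁻¹) / (2 * √(c * (t⁻¹ - 1)))| • (((c + √(c * (t⁻¹ - 1)) ^ 2 : ℝ) : ℂ) ^ (-s)) =
    ((c : ℂ) ^ (1 / 2 - s) * (1 / 2)) * ((t : ℂ) ^ ((s - 1 / 2) - 1) * (1 - (t : ℂ)) ^ ((1 / 2 : ℂ) - 1)) := by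
  obtain ⟨h0, h1⟩ := ht
  have h2 : 1 < t⁻¹ := (one_lt_inv₀ h0).2 h1
  have h3 : 0 < c * (t⁻¹ - 1) := mul_pos hc (by linarith)
  have h4 : 0 < 1 - t := by linarith
  have e1 : c + √(c * (t⁻¹ - 1)) ^ 2 = c * t⁻¹ := by rw [Real.sq_sqrt h3.le]; ring
  have e2 : |c * (-(t ^ 2)⁻¹) / (2 * √(c * (t⁻¹ - 1)))| = (1 / 2) * (√c * (√t * (t ^ 2)⁻¹ * (√(1 - t))⁻¹)) := by
    have : c * (-(t ^ 2)⁻¹) / (2 * √(c * (t⁻¹ - 1))) = - (c * (t^2)⁻¹ / (2 * √(c * (t⁻¹ - 1)))) := by ring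
    rw [this, abs_neg, abs_of_pos (by positivity)]
    have : c * (t⁻¹ - 1) = c * (1 - t) / t := by field_simp
    rw [this, Real.sqrt_div (by positivity), Real.sqrt_mul hc.le]
    field_simp
    rw [Real.sq_sqrt hc.le]
  rw [e1, e2, Complex.real_smul]
  push_cast
  have hc' : (c : ℂ) ≠ 0 := by exact_mod_cast hc.ne'
  have ht' : (t : ℂ) ≠ 0 := by exact_mod_cast h0.ne'
  have h4' : (1 - t : ℂ) ≠ 0 := by exact_mod_cast h4.ne'
  rw [cpow_half c hc, cpow_half t h0, cpow_half (1 - t) h4, ← Complex.ofReal_inv,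
    Complex.mul_cpow_ofReal_nonneg hc.le (by positivity)]
  push_cast
  have : ((t : ℂ)⁻¹) ^ (-s) = (t : ℂ) ^ s := by
    rw [Complex.inv_cpow _ _ (by rw [Complex.arg_ofReal_of_nonneg h0.le]; exact Real.pi_pos.ne), Complex.cpow_neg, inv_inv]
  rw [this, show (1 / 2 - s : ℂ) = 1 / 2 + -s by ring, Complex.cpow_add _ _ hc',
    show s - 1/2 - 1 = s + 1/2 - 2 by ring, Complex.cpow_sub _ _ ht', Complex.cpow_add _ _ ht',
    show (1 / 2 - 1 : ℂ) = - (1 / 2) by norm_num, Complex.cpow_neg (1 - (t:ℂ))]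
  rw [show (t:ℂ) ^ (2:ℂ) = (t:ℂ)^2 by norm_cast]
  field_simp

lemma lemA {c : ℝ} (hc : 0 < c) {s : ℂ} (hs : 1 / 2 < s.re) :
    IntegrableOn (fun v : ℝ => ((c + v ^ 2 : ℝ) : ℂ) ^ (-s)) (Set.Ioi 0) ∧
    ∫ v in Set.Ioi (0:ℝ), ((c + v ^ 2 : ℝ) : ℂ) ^ (-s) =
      (c : ℂ) ^ (1 / 2 - s) * (1 / 2 * Complex.betaIntegral (s - 1 / 2) (1 / 2)) := by
  rw [← subA_image hc]
  rw [integrableOn_image_iff_integrableOn_abs_deriv_smul measurableSet_Ioo (subA_deriv hc) (subA_inj hc),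
    integral_image_eq_integral_abs_deriv_smul measurableSet_Ioo (subA_deriv hc) (subA_inj hc)]
  have hb := beta_integrableOn (u := s - 1/2) (v := 1/2) (by simp at *; linarith) (by simp)
  constructor
  · refine IntegrableOn.congr_fun (hb.const_mul ((c : ℂ) ^ (1 / 2 - s) * (1 / 2))) ?_ measurableSet_Ioo
    intro t ht
    exact (subA_eq hc s t ht).symm
  · rw [setIntegral_congr_fun measurableSet_Ioo (fun t ht => subA_eq hc s t ht), integral_const_mul,
      beta_eq_setIntegral, mul_assoc]
end lemA

section lemB

lemma jint_eq {b : ℝ} (s : ℂ) {t : ℝ} (ht : t ∈ Set.Ioo (0:ℝ) 1) (hb : 1 ≤ b) :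
    (t : ℂ) ^ (s - 1) * (1 - (t : ℂ)) ^ (s - 1) * ((b : ℂ) - t) ^ (1 / 2 - s) =
    (((√(b - t))⁻¹ : ℝ) : ℂ) * ((t * (1 - t) / (b - t) : ℝ) : ℂ) ^ (s - 1) := by
  obtain ⟨h0, h1⟩ := ht
  have h2 : 0 < 1 - t := by linarith
  have h3 : 0 < b - t := by linarith
  have h3' : ((b - t : ℝ) : ℂ) ≠ 0 := by exact_mod_cast h3.ne'
  rw [div_eq_mul_inv (t * (1 - t)), Complex.ofReal_mul (t * (1 - t)), Complex.mul_cpow_ofReal_nonneg (by positivity) (by positivity),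
    Complex.ofReal_mul t, Complex.mul_cpow_ofReal_nonneg (by positivity) (by positivity)]
  have e1 : (1 - t : ℂ) = ((1 - t : ℝ) : ℂ) := by push_cast; rfl
  have e2 : (b - t : ℂ) = ((b - t : ℝ) : ℂ) := by push_cast; rfl
  rw [e1, e2, Complex.ofReal_inv, Complex.ofReal_inv, cpow_half _ h3, Complex.inv_cpow _ _ (by rw [Complex.arg_ofReal_of_nonneg h3.le]; exact Real.pi_pos.ne),
    ← Complex.cpow_neg, ← Complex.cpow_neg, show (1/2 - s : ℂ) = - (1/2) + (- (s - 1)) by ring, Complex.cpow_add _ _ h3']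
  ring

lemma jint_norm {b : ℝ} (s : ℂ) {t : ℝ} (ht : t ∈ Set.Ioo (0:ℝ) 1) (hb : 1 ≤ b) :
    ‖(t : ℂ) ^ (s - 1) * (1 - (t : ℂ)) ^ (s - 1) * ((b : ℂ) - t) ^ (1 / 2 - s)‖ =
    t ^ (s.re - 1) * (1 - t) ^ (s.re - 1) * (b - t) ^ (1 / 2 - s.re) := by
  obtain ⟨h0, h1⟩ := ht
  have h2 : 0 < 1 - t := by linarith
  have h3 : 0 < b - t := by linarith
  rw [norm_mul, norm_mul, ← Complex.ofReal_one, ← Complex.ofReal_sub 1 t, ← Complex.ofReal_sub,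
    Complex.norm_cpow_eq_rpow_re_of_pos h0, Complex.norm_cpow_eq_rpow_re_of_pos h2,
    Complex.norm_cpow_eq_rpow_re_of_pos h3]
  simp

lemma jint_integrable {b : ℝ} {s : ℂ} (hb : 1 ≤ b) (hs : 1 / 2 < s.re) :
    IntegrableOn (fun t : ℝ => (t : ℂ) ^ (s - 1) * (1 - (t : ℂ)) ^ (s - 1) * ((b : ℂ) - t) ^ (1 / 2 - s))
      (Set.Ioo 0 1) := by
  have hB := beta_integrableOn (u := s) (v := 1/2) (by linarith) (by simp)
  refine Integrable.mono hB (Measurable.aestronglyMeasurable (by fun_prop)) ?_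
  refine (ae_restrict_iff' measurableSet_Ioo).2 (Filter.Eventually.of_forall fun t ht => ?_)
  rw [jint_norm s ht hb]
  obtain ⟨h0, h1⟩ := ht
  have h2 : 0 < 1 - t := by linarith
  have h3 : 0 < b - t := by linarith
  rw [norm_mul, ← Complex.ofReal_one, ← Complex.ofReal_sub 1 t, 
    Complex.norm_cpow_eq_rpow_re_of_pos h0, Complex.norm_cpow_eq_rpow_re_of_pos h2]
  have : (b - t) ^ (1 / 2 - s.re) ≤ (1 - t) ^ (1 / 2 - s.re) :=
    Real.rpow_le_rpow_of_nonpos h2 (by linarith) (by linarith)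
  calc _ ≤ t ^ (s.re - 1) * (1 - t) ^ (s.re - 1) * (1 - t) ^ (1 / 2 - s.re) := by gcongr
    _ = t ^ (s.re - 1) * (1 - t) ^ (s.re - 1 + (1 / 2 - s.re)) := by rw [Real.rpow_add h2]; ring
    _ = _ := by
      simp

variable {C S : ℝ}

lemma tau_mem (hS : 0 < S) (hC : C ^ 2 = S ^ 2 + 1) {t : ℝ} (ht : t ∈ Set.Ioo (0:ℝ) 1) :
    C ^ 2 - C ^ 2 * S ^ 2 / (C ^ 2 - t) ∈ Set.Ioo (0:ℝ) 1 := by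
  obtain ⟨h0, h1⟩ := ht
  have h3 : 0 < C ^ 2 - t := by nlinarith
  have hS2 : 0 < S ^ 2 := by positivity
  constructor
  · rw [sub_pos, div_lt_iff₀ h3]; nlinarith
  · rw [sub_lt_comm, lt_div_iff₀ h3]; nlinarith

lemma tau_tau (hS : 0 < S) (hC : C ^ 2 = S ^ 2 + 1) {t : ℝ} (ht : t ∈ Set.Ioo (0:ℝ) 1) :
    C ^ 2 - C ^ 2 * S ^ 2 / (C ^ 2 - (C ^ 2 - C ^ 2 * S ^ 2 / (C ^ 2 - t))) = t := by
  obtain ⟨h0, h1⟩ := ht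
  have h3 : 0 < C ^ 2 - t := by nlinarith
  have hC2 : 0 < C ^ 2 := by nlinarith
  have hC0 : C ≠ 0 := by rintro rfl; simp at hC2
  rw [sub_sub_cancel]
  field_simp
  ring

lemma tau_image (hS : 0 < S) (hC : C ^ 2 = S ^ 2 + 1) :
    (fun t : ℝ => C ^ 2 - C ^ 2 * S ^ 2 / (C ^ 2 - t)) '' Set.Ioo (0:ℝ) 1 = Set.Ioo 0 1 := by
  ext x
  constructor
  · rintro ⟨t, ht, rfl⟩; exact tau_mem hS hC ht
  · intro hx; exact ⟨_, tau_mem hS hC hx, tau_tau hS hC hx⟩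

lemma tau_inj (hS : 0 < S) (hC : C ^ 2 = S ^ 2 + 1) :
    Set.InjOn (fun t : ℝ => C ^ 2 - C ^ 2 * S ^ 2 / (C ^ 2 - t)) (Set.Ioo (0:ℝ) 1) := by
  intro x hx y hy h
  rw [← tau_tau hS hC hx, ← tau_tau hS hC hy]
  simp only at h
  rw [h]

lemma tau_deriv (hS : 0 < S) (hC : C ^ 2 = S ^ 2 + 1) (t : ℝ) (ht : t ∈ Set.Ioo (0:ℝ) 1) :
    HasDerivWithinAt (fun t : ℝ => C ^ 2 - C ^ 2 * S ^ 2 / (C ^ 2 - t))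
      (- (C ^ 2 * S ^ 2 / (C ^ 2 - t) ^ 2)) (Set.Ioo 0 1) t := by
  obtain ⟨h0, h1⟩ := ht
  have h3 : 0 < C ^ 2 - t := by nlinarith
  have := (((hasDerivAt_id t).const_sub (C^2)).fun_inv h3.ne').const_mul (C^2*S^2) |>.const_sub (C^2)
  refine HasDerivAt.hasDerivWithinAt ?_
  refine this.congr_deriv ?_
  simp only [id]
  ring

/-- The transformed integrand. -/
lemma tau_eq (hCp : 0 < C) (hS : 0 < S) (hC : C ^ 2 = S ^ 2 + 1) (s : ℂ) (t : ℝ) (ht : t ∈ Set.Ioo (0:ℝ) 1) :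
    |- (C ^ 2 * S ^ 2 / (C ^ 2 - t) ^ 2)| • 
      ((((√(C ^ 2 - (C ^ 2 - C ^ 2 * S ^ 2 / (C ^ 2 - t))))⁻¹ : ℝ) : ℂ) *
       (((C ^ 2 - C ^ 2 * S ^ 2 / (C ^ 2 - t)) * (1 - (C ^ 2 - C ^ 2 * S ^ 2 / (C ^ 2 - t))) /
         (C ^ 2 - (C ^ 2 - C ^ 2 * S ^ 2 / (C ^ 2 - t))) : ℝ) : ℂ) ^ (s - 1)) =
    ((C * S / (√(C ^ 2 - t)) ^ 3 : ℝ) : ℂ) * ((t * (1 - t) / (C ^ 2 - t) : ℝ) : ℂ) ^ (s - 1) := by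
  obtain ⟨h0, h1⟩ := ht
  have h3 : 0 < C ^ 2 - t := by nlinarith
  have e1 : (C ^ 2 - C ^ 2 * S ^ 2 / (C ^ 2 - t)) * (1 - (C ^ 2 - C ^ 2 * S ^ 2 / (C ^ 2 - t))) /
         (C ^ 2 - (C ^ 2 - C ^ 2 * S ^ 2 / (C ^ 2 - t))) = t * (1 - t) / (C ^ 2 - t) := by
    rw [sub_sub_cancel]
    field_simp
    have : S ^ 2 = C ^ 2 - 1 := by linarith
    rw [this]; ring
  rw [e1, abs_neg, abs_of_pos (by positivity), sub_sub_cancel, Complex.real_smul, ← mul_assoc, ← Complex.ofReal_mul]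
  congr 2
  rw [Real.sqrt_div (by positivity), show C ^ 2 * S ^ 2 = (C * S) ^ 2 by ring, Real.sqrt_sq (by positivity)]
  obtain ⟨w, hw⟩ : ∃ w, w = √(C ^ 2 - t) := ⟨_, rfl⟩
  have hw0 : 0 < w := by rw [hw]; positivity
  have : C ^ 2 - t = w ^ 2 := by rw [hw, Real.sq_sqrt h3.le]
  rw [← hw, this]
  field_simp

lemma P_deriv (hS : 0 < S) (hC : C ^ 2 = S ^ 2 + 1) (t : ℝ) (ht : t ∈ Set.Icc (0:ℝ) 1) :
    HasDerivAt (fun t : ℝ => √(C ^ 2 - t) - C * S / √(C ^ 2 - t))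
      (- ((1 / 2) * ((√(C ^ 2 - t))⁻¹ + C * S / √(C ^ 2 - t) ^ 3))) t := by
  obtain ⟨h0, h1⟩ := ht
  have h3 : 0 < C ^ 2 - t := by nlinarith
  have h4 := (((hasDerivAt_id t).const_sub (C^2))).sqrt h3.ne'
  have h5 := h4.sub ((h4.fun_inv (by simp only [id]; positivity)).const_mul (C * S))
  simp only [id] at h5
  refine h5.congr_deriv ?_
  obtain ⟨w, hw⟩ : ∃ w, w = √(C ^ 2 - t) := ⟨_, rfl⟩
  have hw0 : 0 < w := by rw [hw]; positivity
  rw [← hw]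
  field_simp
  ring

lemma P_anti (hCp : 0 < C) (hS : 0 < S) (hC : C ^ 2 = S ^ 2 + 1) :
    StrictAntiOn (fun t : ℝ => √(C ^ 2 - t) - C * S / √(C ^ 2 - t)) (Set.Icc 0 1) := by
  intro x hx y hy hxy
  have h3 : 0 < C ^ 2 - y := by nlinarith [hy.2, hS]
  have h4 : √(C ^ 2 - y) < √(C ^ 2 - x) := Real.sqrt_lt_sqrt h3.le (by linarith)
  have h5 : 0 < √(C ^ 2 - y) := Real.sqrt_pos.2 h3
  have : C * S / √(C ^ 2 - x) < C * S / √(C ^ 2 - y) := by gcongr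
  simp only
  linarith

lemma P_image (hCp : 0 < C) (hS : 0 < S) (hC : C ^ 2 = S ^ 2 + 1) :
    (fun t : ℝ => √(C ^ 2 - t) - C * S / √(C ^ 2 - t)) '' Set.Ioo 0 1 = Set.Ioo (-(C - S)) (C - S) := by
  have e0 : √(C ^ 2 - 0) - C * S / √(C ^ 2 - 0) = C - S := by
    rw [sub_zero, Real.sqrt_sq hCp.le]; field_simp
  have e1 : √(C ^ 2 - 1) - C * S / √(C ^ 2 - 1) = -(C - S) := by
    rw [hC, add_sub_cancel_right, Real.sqrt_sq hS.le]; field_simp; ring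
  have hcont : ContinuousOn (fun t : ℝ => √(C ^ 2 - t) - C * S / √(C ^ 2 - t)) (Set.Icc 0 1) :=
    fun t ht => (P_deriv hS hC t ht).continuousAt.continuousWithinAt
  apply Set.Subset.antisymm
  · rintro _ ⟨t, ht, rfl⟩
    constructor
    · rw [← e1]; exact P_anti hCp hS hC (Set.Ioo_subset_Icc_self ht) (by simp) ht.2
    · rw [← e0]; exact P_anti hCp hS hC (by simp) (Set.Ioo_subset_Icc_self ht) ht.1
  · have := intermediate_value_Ioo' zero_le_one hcont
    simp only [e0, e1] at this
    exact this

lemma P_sq (hS : 0 < S) (hC : C ^ 2 = S ^ 2 + 1) {t : ℝ} (ht : t ∈ Set.Ioo (0:ℝ) 1) :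
    (C - S) ^ 2 - (√(C ^ 2 - t) - C * S / √(C ^ 2 - t)) ^ 2 = t * (1 - t) / (C ^ 2 - t) := by
  obtain ⟨h0, h1⟩ := ht
  have h3 : 0 < C ^ 2 - t := by nlinarith
  obtain ⟨w, hw⟩ : ∃ w, w = √(C ^ 2 - t) := ⟨_, rfl⟩
  have hw0 : 0 < w := by rw [hw]; positivity
  have h4 : C ^ 2 - t = w ^ 2 := by rw [hw, Real.sq_sqrt h3.le]
  rw [← hw, h4]
  have h5 : t = C ^ 2 - w ^ 2 := by linarith
  rw [h5]
  field_simp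
  have : S ^ 2 = C ^ 2 - 1 := by linarith
  ring_nf
  rw [this]
  ring

lemma lemB_step1 (hCp : 0 < C) (hS : 0 < S) (hC : C ^ 2 = S ^ 2 + 1) {s : ℂ} (hs : 1 / 2 < s.re) :
    ∫ t in Set.Ioo (0:ℝ) 1, (t : ℂ) ^ (s - 1) * (1 - (t : ℂ)) ^ (s - 1) * (((C ^ 2 : ℝ) : ℂ) - t) ^ (1 / 2 - s)
      = ∫ p in Set.Ioo (-(C - S)) (C - S), (((C - S) ^ 2 - p ^ 2 : ℝ) : ℂ) ^ (s - 1) := by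
  have hb : 1 ≤ C ^ 2 := by nlinarith
  have hint := jint_integrable hb hs
  have hcongr := fun t ht => jint_eq (b := C ^ 2) s (t := t) ht hb
  have hint2 := hint.congr_fun hcongr measurableSet_Ioo
  rw [setIntegral_congr_fun measurableSet_Ioo hcongr]
  have hint3 := hint2
  rw [← tau_image hS hC, integrableOn_image_iff_integrableOn_abs_deriv_smul measurableSet_Ioo (tau_deriv hS hC) (tau_inj hS hC)] at hint3
  have hint4 := hint3.congr_fun (fun t ht => tau_eq hCp hS hC s t ht) measurableSet_Ioo
  have h2 := integral_image_eq_integral_abs_deriv_smul measurableSet_Ioo (tau_deriv hS hC) (tau_inj hS hC)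
    (fun t : ℝ => (((√(C ^ 2 - t))⁻¹ : ℝ) : ℂ) * ((t * (1 - t) / (C ^ 2 - t) : ℝ) : ℂ) ^ (s - 1))
  rw [tau_image hS hC, setIntegral_congr_fun measurableSet_Ioo (fun t ht => tau_eq hCp hS hC s t ht)] at h2
  have h3 := integral_image_eq_integral_abs_deriv_smul measurableSet_Ioo
    (fun t ht => (P_deriv hS hC t (Set.Ioo_subset_Icc_self ht)).hasDerivWithinAt (s := Set.Ioo 0 1))
    ((P_anti hCp hS hC).injOn.mono Set.Ioo_subset_Icc_self)
    (fun p : ℝ => (((C - S) ^ 2 - p ^ 2 : ℝ) : ℂ) ^ (s - 1))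
  rw [P_image hCp hS hC] at h3
  have h4 := integral_add hint2 hint4
  rw [← h2] at h4
  have h5 : ∫ t in Set.Ioo (0:ℝ) 1, |(- ((1 / 2) * ((√(C ^ 2 - t))⁻¹ + C * S / √(C ^ 2 - t) ^ 3)))| •
      (((C - S) ^ 2 - (√(C ^ 2 - t) - C * S / √(C ^ 2 - t)) ^ 2 : ℝ) : ℂ) ^ (s - 1) =
      (1 / 2) * ∫ t in Set.Ioo (0:ℝ) 1, ((((√(C ^ 2 - t))⁻¹ : ℝ) : ℂ) * ((t * (1 - t) / (C ^ 2 - t) : ℝ) : ℂ) ^ (s - 1)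
       + ((C * S / (√(C ^ 2 - t)) ^ 3 : ℝ) : ℂ) * ((t * (1 - t) / (C ^ 2 - t) : ℝ) : ℂ) ^ (s - 1)) := by
    rw [← integral_const_mul]
    refine setIntegral_congr_fun measurableSet_Ioo fun t ht => ?_
    rw [P_sq hS hC ht, abs_neg, abs_of_nonneg (by positivity), Complex.real_smul]
    push_cast
    ring
  rw [h3, h5, h4]
  ring

lemma lemB_step2 {E : ℝ} (hE : 0 < E) (s : ℂ) :
    ∫ p in Set.Ioo (-E) E, ((E ^ 2 - p ^ 2 : ℝ) : ℂ) ^ (s - 1) =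
      (2 : ℂ) ^ (2 * s - 1) * (E : ℂ) ^ (2 * s - 1) * Complex.betaIntegral s s := by
  have him : (fun x : ℝ => 2 * E * x - E) '' Set.Ioo 0 1 = Set.Ioo (-E) E := by
    ext p; constructor
    · rintro ⟨x, ⟨h0, h1⟩, rfl⟩
      constructor <;> simp only <;> nlinarith
    · rintro ⟨h0, h1⟩
      refine ⟨(p + E) / (2 * E), ⟨by apply div_pos <;> linarith, ?_⟩, ?_⟩
      · rw [div_lt_one (by linarith)]; linarith
      · field_simp; ring
  have hd : ∀ x ∈ Set.Ioo (0:ℝ) 1, HasDerivWithinAt (fun x : ℝ => 2 * E * x - E) (2 * E) (Set.Ioo 0 1) x := by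
    intro x _
    have := ((hasDerivAt_id x).const_mul (2 * E)).sub_const E
    simpa using this.hasDerivWithinAt
  have hinj : Set.InjOn (fun x : ℝ => 2 * E * x - E) (Set.Ioo 0 1) := by
    intro x _ y _ h
    simp only at h
    have : 2 * E * x = 2 * E * y := by linarith
    exact mul_left_cancel₀ (by positivity) this
  rw [← him, integral_image_eq_integral_abs_deriv_smul measurableSet_Ioo hd hinj, ← beta_eq_setIntegral, ← integral_const_mul]
  refine setIntegral_congr_fun measurableSet_Ioo fun x hx => ?_
  obtain ⟨h0, h1⟩ := hx
  have h2 : 0 < 1 - x := by linarith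
  have h2E : ((2 * E : ℝ) : ℂ) ≠ 0 := by norm_cast; positivity
  rw [abs_of_pos (by positivity), Complex.real_smul,
    show E ^ 2 - (2 * E * x - E) ^ 2 = ((2 * E) * (2 * E)) * (x * (1 - x)) by ring]
  rw [Complex.ofReal_mul (2 * E * (2 * E)), Complex.mul_cpow_ofReal_nonneg (by positivity) (by positivity),
    Complex.ofReal_mul (2 * E), Complex.mul_cpow_ofReal_nonneg (by positivity) (by positivity),
    Complex.ofReal_mul x, Complex.mul_cpow_ofReal_nonneg (by positivity) (by positivity)]
  have : (2 : ℂ) ^ (2 * s - 1) * (E : ℂ) ^ (2 * s - 1) = ((2 * E : ℝ) : ℂ) ^ (2 * s - 1) := by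
    rw [Complex.ofReal_mul, Complex.mul_cpow_ofReal_nonneg (by norm_num) hE.le]; norm_num
  rw [this, show 2 * s - 1 = 1 + (s - 1) + (s - 1) by ring, Complex.cpow_add _ _ h2E, Complex.cpow_add _ _ h2E,
    Complex.cpow_one]
  push_cast
  ring

lemma beta_dup {s : ℂ} (hs : 1 / 2 < s.re) :
    (2 : ℂ) ^ (2 * s - 1) * Complex.betaIntegral s s = Complex.betaIntegral s (1 / 2) := by
  rw [Complex.betaIntegral_eq_Gamma_mul_div _ _ (by linarith) (by linarith),
    Complex.betaIntegral_eq_Gamma_mul_div _ _ (by linarith) (by simp), Complex.Gamma_one_half_eq]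
  have h := Complex.Gamma_mul_Gamma_add_half s
  have h1 : Complex.Gamma (s + 1 / 2) ≠ 0 := Complex.Gamma_ne_zero_of_re_pos (by simp; linarith)
  have h2 : Complex.Gamma (2 * s) ≠ 0 := Complex.Gamma_ne_zero_of_re_pos (by simp; linarith)
  have hpi : (Real.pi : ℂ) ^ (1 / 2 : ℂ) = ((√Real.pi : ℝ) : ℂ) := (cpow_half _ Real.pi_pos).symm
  rw [hpi, ← two_mul]
  rw [mul_div_assoc', div_eq_div_iff h2 h1]
  have h3 : (2 : ℂ) ^ (2 * s - 1) * 2 ^ (1 - 2 * s) = 1 := by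
    rw [← Complex.cpow_add _ _ two_ne_zero]; simp
  linear_combination (2 : ℂ) ^ (2 * s - 1) * Complex.Gamma s * h + Complex.Gamma s * Complex.Gamma (2 * s) * ((√Real.pi : ℝ) : ℂ) * h3

lemma lemB (hCp : 0 < C) (hS : 0 ≤ S) (hC : C ^ 2 = S ^ 2 + 1) {s : ℂ} (hs : 1 / 2 < s.re) :
    ∫ t in Set.Ioo (0:ℝ) 1, (t : ℂ) ^ (s - 1) * (1 - (t : ℂ)) ^ (s - 1) * (((C ^ 2 : ℝ) : ℂ) - t) ^ (1 / 2 - s)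
      = ((C - S : ℝ) : ℂ) ^ (2 * s - 1) * Complex.betaIntegral s (1 / 2) := by
  rcases hS.eq_or_lt with rfl | hS
  · have : C = 1 := by nlinarith
    subst this
    rw [← beta_eq_setIntegral]
    simp only [sub_zero, Complex.ofReal_one, Complex.one_cpow, one_mul, one_pow]
    refine setIntegral_congr_fun measurableSet_Ioo fun t ht => ?_
    have h4 : (1 - t : ℂ) ≠ 0 := by exact_mod_cast (sub_pos.2 ht.2).ne'
    rw [mul_assoc, ← Complex.cpow_add _ _ h4]
    congr 2; ring
  · have : 0 < C - S := by nlinarith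
    rw [lemB_step1 hCp hS hC hs, lemB_step2 this, ← beta_dup hs]
    ring
end lemB

section lemC

lemma const_eq {s : ℂ} (hs : 1 / 2 < s.re) :
    (1 / (4 * (Real.pi : ℂ))) * (1 / 2 * Complex.betaIntegral (s - 1 / 2) (1 / 2)) *
      Complex.betaIntegral s (1 / 2) = 1 / (4 * (2 * s - 1)) := by
  rw [Complex.betaIntegral_eq_Gamma_mul_div _ _ (by simp at *; linarith) (by simp),
    Complex.betaIntegral_eq_Gamma_mul_div _ _ (by linarith) (by simp), Complex.Gamma_one_half_eq]
  have h0 : Complex.Gamma s ≠ 0 := Complex.Gamma_ne_zero_of_re_pos (by linarith)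
  have h1 : Complex.Gamma (s - 1 / 2) ≠ 0 := Complex.Gamma_ne_zero_of_re_pos (by simp at *; linarith)
  have h3 : s - 1 / 2 ≠ 0 := by
    intro h
    have := congrArg Complex.re h
    simp at this hs; linarith
  have h4 : 2 * s - 1 ≠ 0 := by
    intro h; apply h3; linear_combination h / 2
  have h5 : Complex.Gamma (s + 1 / 2) = (s - 1 / 2) * Complex.Gamma (s - 1 / 2) := by
    rw [← Complex.Gamma_add_one _ h3]; congr 1; ring
  rw [h5, sub_add_cancel]
  have hpi : (Real.pi : ℂ) ^ (1 / 2 : ℂ) * (Real.pi : ℂ) ^ (1 / 2 : ℂ) = Real.pi := by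
    rw [← Complex.cpow_add _ _ (by exact_mod_cast Real.pi_ne_zero)]; norm_num
  have hpi0 : (Real.pi : ℂ) ≠ 0 := by exact_mod_cast Real.pi_ne_zero
  generalize (Real.pi : ℂ) ^ (1 / 2 : ℂ) = q at *
  rw [← hpi] at hpi0 ⊢
  have hq : q ≠ 0 := left_ne_zero_of_mul hpi0
  rw [show s - 1 / 2 = (2 * s - 1) / 2 by ring] at *
  field_simp

lemma kern_norm (s : ℂ) {x t : ℝ} (ht : t ∈ Set.Ioo (0:ℝ) 1) (hx : 1 ≤ x) :
    ((‖(t : ℂ) ^ (s - 1) * (1 - (t : ℂ)) ^ (s - 1) * ((x : ℂ) - t) ^ (-s)‖ : ℝ) : ℂ) =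
    (t : ℂ) ^ ((s.re : ℂ) - 1) * (1 - (t : ℂ)) ^ ((s.re : ℂ) - 1) * ((x : ℂ) - t) ^ (-(s.re : ℂ)) := by
  obtain ⟨h0, h1⟩ := ht
  have h2 : 0 < 1 - t := by linarith
  have h3 : 0 < x - t := by linarith
  have e1 : (1 - t : ℂ) = ((1 - t : ℝ) : ℂ) := by push_cast; rfl
  have e2 : (x - t : ℂ) = ((x - t : ℝ) : ℂ) := by push_cast; rfl
  rw [e1, e2, norm_mul, norm_mul, Complex.norm_cpow_eq_rpow_re_of_pos h0, Complex.norm_cpow_eq_rpow_re_of_pos h2,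
    Complex.norm_cpow_eq_rpow_re_of_pos h3]
  rw [Complex.ofReal_mul, Complex.ofReal_mul, Complex.ofReal_cpow h0.le, Complex.ofReal_cpow h2.le,
    Complex.ofReal_cpow h3.le]
  simp

lemma green_norm_le (s : ℂ) {x : ℝ} (hx : 1 ≤ x) : ‖greenH s x‖ ≤ (greenH (s.re : ℂ) x).re := by
  have h : greenH (s.re : ℂ) x = (((1 / (4 * Real.pi)) * ∫ t in Set.Ioo (0:ℝ) 1,
      ‖(t : ℂ) ^ (s - 1) * (1 - (t : ℂ)) ^ (s - 1) * ((x : ℂ) - t) ^ (-s)‖ : ℝ) : ℂ) := by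
    rw [greenH, ← setIntegral_congr_fun measurableSet_Ioo (fun t ht => kern_norm s ht hx), integral_complex_ofReal]
    push_cast; rfl
  rw [h, Complex.ofReal_re, greenH, norm_mul]
  have : ‖1 / (4 * (Real.pi : ℂ))‖ = 1 / (4 * Real.pi) := by
    rw [show 1 / (4 * (Real.pi : ℂ)) = ((1 / (4 * Real.pi) : ℝ) : ℂ) by push_cast; rfl,
      Complex.norm_real, Real.norm_of_nonneg (by positivity)]
  rw [this]
  gcongr
  exact norm_integral_le_integral_norm _

variable {C S : ℝ}

lemma kern_split {b v t : ℝ} {s : ℂ} :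
    (t : ℂ) ^ (s - 1) * (1 - (t : ℂ)) ^ (s - 1) * (((b + v ^ 2 : ℝ) : ℂ) - t) ^ (-s) =
    ((t : ℂ) ^ (s - 1) * (1 - (t : ℂ)) ^ (s - 1)) * ((b - t + v ^ 2 : ℝ) : ℂ) ^ (-s) := by
  congr 2; push_cast; ring

lemma kern_integrable {b : ℝ} (hb : 1 ≤ b) {s : ℂ} (hs : 1 / 2 < s.re) :
    Integrable (fun p : ℝ × ℝ => 
      (p.2 : ℂ) ^ (s - 1) * (1 - (p.2 : ℂ)) ^ (s - 1) * (((b + p.1 ^ 2 : ℝ) : ℂ) - p.2) ^ (-s))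
      ((volume.restrict (Set.Ioi 0)).prod (volume.restrict (Set.Ioo 0 1))) := by
  rw [integrable_prod_iff' (Measurable.aestronglyMeasurable (by fun_prop))]
  constructor
  · refine (ae_restrict_iff' measurableSet_Ioo).2 (Filter.Eventually.of_forall fun t ht => ?_)
    simp only [kern_split]
    exact (lemA (c := b - t) (by linarith [ht.2]) hs).1.const_mul _
  · have hσ : 1 / 2 < (s.re : ℂ).re := by simpa using hs
    have h1 := (jint_integrable (s := (s.re : ℂ)) hb hσ).mul_const
      (1 / 2 * Complex.betaIntegral ((s.re : ℂ) - 1 / 2) (1 / 2))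
    refine IntegrableOn.congr_fun h1.re ?_ measurableSet_Ioo
    intro t ht
    simp only
    have h2 : (((∫ v in Set.Ioi (0:ℝ), ‖(t : ℂ) ^ (s - 1) * (1 - (t : ℂ)) ^ (s - 1) * (((b + v ^ 2 : ℝ) : ℂ) - t) ^ (-s)‖) : ℝ) : ℂ)
        = (t : ℂ) ^ ((s.re : ℂ) - 1) * (1 - (t : ℂ)) ^ ((s.re : ℂ) - 1) * ((b : ℂ) - t) ^ (1 / 2 - (s.re : ℂ)) *
      (1 / 2 * Complex.betaIntegral ((s.re : ℂ) - 1 / 2) (1 / 2)) := by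
      rw [← integral_complex_ofReal]
      rw [setIntegral_congr_fun measurableSet_Ioi (fun v _ => kern_norm s (x := b + v ^ 2) ht (by nlinarith [sq_nonneg v]))]
      simp only [kern_split]
      rw [integral_const_mul, (lemA (c := b - t) (by linarith [ht.2]) hσ).2]
      push_cast
      ring
    rw [← h2]
    simp

lemma lemC_int {b : ℝ} (hb : 1 ≤ b) {s : ℂ} (hs : 1 / 2 < s.re) :
    IntegrableOn (fun v : ℝ => greenH s (b + v ^ 2)) (Set.Ioi 0) :=
  (kern_integrable hb hs).integral_prod_left.const_mul _

lemma lemC (hCp : 0 < C) (hS : 0 ≤ S) (hC : C ^ 2 = S ^ 2 + 1) {s : ℂ} (hs : 1 / 2 < s.re) :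
    ∫ v in Set.Ioi (0:ℝ), greenH s (C ^ 2 + v ^ 2) = ((C - S : ℝ) : ℂ) ^ (2 * s - 1) / (4 * (2 * s - 1)) := by
  have hb : 1 ≤ C ^ 2 := by nlinarith
  simp only [greenH]
  rw [integral_const_mul, integral_integral_swap (kern_integrable hb hs)]
  have : ∀ t ∈ Set.Ioo (0:ℝ) 1, ∫ v in Set.Ioi (0:ℝ), 
      (t : ℂ) ^ (s - 1) * (1 - (t : ℂ)) ^ (s - 1) * (((C ^ 2 + v ^ 2 : ℝ) : ℂ) - t) ^ (-s) =
      (t : ℂ) ^ (s - 1) * (1 - (t : ℂ)) ^ (s - 1) * (((C ^ 2 : ℝ) : ℂ) - t) ^ (1 / 2 - s) *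
       (1 / 2 * Complex.betaIntegral (s - 1 / 2) (1 / 2)) := by
    intro t ht
    simp only [kern_split]
    rw [integral_const_mul, (lemA (c := C ^ 2 - t) (by linarith [ht.2]) hs).2]
    push_cast
    ring
  rw [setIntegral_congr_fun measurableSet_Ioo this, integral_mul_const, lemB hCp hS hC hs, div_eq_mul_one_div (_ ^ (2 * s - 1)), ← const_eq hs]
  ring

lemma lemC_norm (hCp : 0 < C) (hS : 0 ≤ S) (hC : C ^ 2 = S ^ 2 + 1) (hCS : 0 < C - S) {s : ℂ} (hs : 1 / 2 < s.re) :
    ∫ v in Set.Ioi (0:ℝ), ‖greenH s (C ^ 2 + v ^ 2)‖ ≤ (C - S) ^ (2 * s.re - 1) / (4 * (2 * s.re - 1)) := by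
  have hb : 1 ≤ C ^ 2 := by nlinarith
  have hσ : 1 / 2 < (s.re : ℂ).re := by simpa using hs
  have h1 := lemC hCp hS hC hσ
  have h2 : ((((C - S) ^ (2 * s.re - 1) / (4 * (2 * s.re - 1))) : ℝ) : ℂ) = 
     ((C - S : ℝ) : ℂ) ^ (2 * (s.re : ℂ) - 1) / (4 * (2 * (s.re : ℂ) - 1)) := by
    rw [Complex.ofReal_div, Complex.ofReal_cpow hCS.le]; push_cast; rfl
  rw [← h2] at h1
  have h3 := congrArg Complex.re h1
  rw [Complex.ofReal_re] at h3
  rw [← h3]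
  have h4 := (lemC_int hb hσ)
  have h5 : (∫ v in Set.Ioi (0:ℝ), greenH (s.re : ℂ) (C ^ 2 + v ^ 2)).re = ∫ v in Set.Ioi (0:ℝ), (greenH (s.re : ℂ) (C ^ 2 + v ^ 2)).re :=
    (integral_re h4).symm
  rw [h5]
  refine integral_mono (lemC_int hb hs).norm h4.re (fun v => ?_)
  exact green_norm_le s (by nlinarith [sq_nonneg v])

/-- Scaled version. -/
lemma lemD (hCp : 0 < C) (hS : 0 ≤ S) (hC : C ^ 2 = S ^ 2 + 1) (hCS : 0 < C - S) {s : ℂ} (hs : 1 / 2 < s.re)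
    {a : ℝ} (ha : 0 < a) :
    IntegrableOn (fun x : ℝ => greenH s (C ^ 2 + (a * x) ^ 2)) (Set.Ioi 0) ∧
    ∫ x in Set.Ioi (0:ℝ), greenH s (C ^ 2 + (a * x) ^ 2) = 
      (a : ℂ)⁻¹ * (((C - S : ℝ) : ℂ) ^ (2 * s - 1) / (4 * (2 * s - 1))) ∧
    ∫ x in Set.Ioi (0:ℝ), ‖greenH s (C ^ 2 + (a * x) ^ 2)‖ ≤ 
      a⁻¹ * ((C - S) ^ (2 * s.re - 1) / (4 * (2 * s.re - 1))) := by
  have hb : 1 ≤ C ^ 2 := by nlinarith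
  refine ⟨?_, ?_, ?_⟩
  · have := (integrableOn_Ioi_comp_mul_left_iff (fun v : ℝ => greenH s (C ^ 2 + v ^ 2)) 0 ha).2
      (by rw [mul_zero]; exact lemC_int hb hs)
    exact this
  · rw [integral_comp_mul_left_Ioi (fun v : ℝ => greenH s (C ^ 2 + v ^ 2)) 0 ha, mul_zero, lemC hCp hS hC hs,
      Complex.real_smul, Complex.ofReal_inv]
  · rw [integral_comp_mul_left_Ioi (fun v : ℝ => ‖greenH s (C ^ 2 + v ^ 2)‖) 0 ha, mul_zero, smul_eq_mul]
    gcongr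
    exact lemC_norm hCp hS hC hCS hs
end lemC

lemma ae_summable_of_integral {α ι : Type*} [Countable ι] [MeasurableSpace α] {μ : Measure α} {F : ι → α → ℂ}
    (hF : ∀ i, Integrable (F i) μ) (hs : Summable fun i => ∫ a, ‖F i a‖ ∂μ) :
    ∀ᵐ a ∂μ, Summable fun i => F i a := by
  have h1 : ∫⁻ a, ∑' i, ‖F i a‖ₑ ∂μ ≠ ⊤ := by
    rw [lintegral_tsum (fun i => (hF i).1.enorm)]
    have (i : ι) : ∫⁻ a, ‖F i a‖ₑ ∂μ = ENNReal.ofReal (∫ a, ‖F i a‖ ∂μ) := by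
      rw [ofReal_integral_norm_eq_lintegral_enorm (hF i)]
    simp only [this]
    exact hs.tsum_ofReal_ne_top
  have h2 := ae_lt_top' (AEMeasurable.tsum (fun i => (hF i).1.enorm)) h1
  filter_upwards [h2] with a ha
  refine Summable.of_norm ?_
  have h3 : ∑' i, ((‖F i a‖₊ : NNReal) : ENNReal) ≠ ⊤ := ha.ne
  have := ENNReal.tsum_coe_ne_top_iff_summable.1 h3
  exact NNReal.summable_coe.2 this

lemma dbl_summable {ℓ : ℝ} (hl : 0 < ℓ) {s : ℂ} (hs : 1 / 2 < s.re) :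
    Summable (fun p : ℕ × ℕ => Complex.exp (-(s + 2 * p.1 + 1) * ℓ) ^ (p.2 + 1)) := by
  have h1 : Summable (fun k : ℕ => Real.exp (-ℓ) ^ k) :=
    summable_geometric_of_lt_one (Real.exp_pos _).le (by simpa using hl)
  refine Summable.of_norm_bounded (h1.mul_of_nonneg h1 (fun _ => by positivity) (fun _ => by positivity)) ?_
  rintro ⟨k, n⟩
  rw [norm_pow, Complex.norm_exp, ← Real.exp_nat_mul, ← Real.exp_nat_mul, ← Real.exp_nat_mul, ← Real.exp_add]
  apply Real.exp_le_exp.2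
  simp
  have : (0:ℝ) ≤ k * n := by positivity
  have hk : (0:ℝ) ≤ k := by positivity
  have hn : (0:ℝ) ≤ n := by positivity
  have : (k : ℝ) + n ≤ (n + 1) * (s.re + 2 * k + 1) := by nlinarith
  nlinarith

lemma dbl_swap {ℓ : ℝ} (hl : 0 < ℓ) {s : ℂ} (hs : 1 / 2 < s.re) :
    HasSum (fun n : ℕ => Complex.exp (-(s + 1) * ℓ) ^ (n + 1) / (1 - Complex.exp (-2 * ℓ) ^ (n + 1)))
     (∑' k : ℕ, Complex.exp (-(s + 2 * k + 1) * ℓ) / (1 - Complex.exp (-(s + 2 * k + 1) * ℓ))) := by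
  have hS := dbl_summable hl hs
  have e1 : ∀ k : ℕ, HasSum (fun n : ℕ => Complex.exp (-(s + 2 * k + 1) * ℓ) ^ (n + 1))
      (Complex.exp (-(s + 2 * k + 1) * ℓ) / (1 - Complex.exp (-(s + 2 * k + 1) * ℓ))) := by
    intro k
    have hr : ‖Complex.exp (-(s + 2 * k + 1) * ℓ)‖ < 1 := by
      rw [Complex.norm_exp, Real.exp_lt_one_iff]
      simp
      have hk : (0:ℝ) ≤ k := by positivity
      have : 0 < s.re + 2 * k + 1 := by linarith
      nlinarith [mul_pos this hl]
    have := (hasSum_geometric_of_norm_lt_one hr).mul_left (Complex.exp (-(s + 2 * k + 1) * ℓ))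
    rw [div_eq_mul_inv]
    refine this.congr_fun ?_ 
    intro n; rw [pow_succ']
  have e2 : ∀ n : ℕ, HasSum (fun k : ℕ => Complex.exp (-(s + 2 * k + 1) * ℓ) ^ (n + 1))
      (Complex.exp (-(s + 1) * ℓ) ^ (n + 1) / (1 - Complex.exp (-2 * ℓ) ^ (n + 1))) := by
    intro n
    have hr : ‖Complex.exp (-2 * ℓ) ^ (n + 1)‖ < 1 := by
      rw [norm_pow, Complex.norm_exp]
      apply pow_lt_one₀ (by positivity) _ (by omega)
      rw [Real.exp_lt_one_iff]
      simp; exact hl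
    have := (hasSum_geometric_of_norm_lt_one hr).mul_left (Complex.exp (-(s + 1) * ℓ) ^ (n + 1))
    rw [div_eq_mul_inv]
    refine this.congr_fun ?_ 
    intro k
    rw [← pow_mul, mul_comm (n+1) k, pow_mul, ← mul_pow, ← Complex.exp_nat_mul (-2 * (ℓ : ℂ)) k, ← Complex.exp_add]
    congr 2; ring
  have h1 := hS.hasSum.prod_fiberwise e1
  have h2 := ((Equiv.prodComm ℕ ℕ).hasSum_iff.2 hS.hasSum).prod_fiberwise e2
  rw [h1.tsum_eq]; exact h2

/-- The terms -/
lemma term_eq {ℓ : ℝ} (hl : 0 < ℓ) (s : ℂ) (n : ℕ) :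
    Complex.exp (-(2 * s - 1) * ((|((n + 1 : ℕ) : ℝ) * ℓ / 2| : ℝ) : ℂ)) *
      (((|Real.sinh (((n + 1 : ℕ) : ℝ) * ℓ / 2)|)⁻¹ : ℝ) - ((Real.cosh (((n + 1 : ℕ) : ℝ) * ℓ / 2))⁻¹ : ℝ) : ℂ) =
    4 * (Complex.exp (-(s + 1) * ℓ) ^ (n + 1) / (1 - Complex.exp (-2 * ℓ) ^ (n + 1))) := by
  obtain ⟨θ, hθ⟩ : ∃ θ : ℝ, θ = ((n + 1 : ℕ) : ℝ) * ℓ / 2 := ⟨_, rfl⟩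
  have hθ0 : 0 < θ := by rw [hθ]; positivity
  rw [← hθ, abs_of_pos hθ0, abs_of_pos (Real.sinh_pos_iff.2 hθ0)]
  rw [← Complex.exp_nat_mul, ← Complex.exp_nat_mul]
  have e1 : ((n + 1 : ℕ) : ℂ) * (-(s + 1) * ℓ) = -(2 * s - 1) * θ + (-3 * θ) := by
    rw [hθ]; push_cast; ring
  have e2 : ((n + 1 : ℕ) : ℂ) * (-2 * ℓ) = ((-(4 * θ) : ℝ) : ℂ) := by
    rw [hθ]; push_cast; ring
  have e3 : (-3 * θ : ℂ) = ((-(3 * θ) : ℝ) : ℂ) := by push_cast; ring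
  rw [e1, e2, Complex.exp_add, mul_div_assoc, mul_left_comm]
  congr 1
  rw [e3, ← Complex.ofReal_exp, ← Complex.ofReal_exp]
  norm_cast
  rw [Real.sinh_eq, Real.cosh_eq, Real.exp_neg, Real.exp_neg, Real.exp_neg,
   show 3 * θ = ((3:ℕ):ℝ) * θ by norm_num, show 4 * θ = ((4:ℕ):ℝ) * θ by norm_num, Real.exp_nat_mul, Real.exp_nat_mul]
  have h1 : 1 < Real.exp θ := by simpa using hθ0
  generalize Real.exp θ = e at *
  have h2 : 1 < e ^ 2 := by nlinarith
  have h4 : 1 < e ^ 4 := by nlinarith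
  have h5 : e ^ 2 - 1 ≠ 0 := by linarith
  have h6 : e ^ 4 - 1 ≠ 0 := by linarith
  have h7 : e ^ 2 + 1 ≠ 0 := by linarith
  have h8 : e ≠ 0 := by linarith
  have a1 : (e - e⁻¹) / 2 = (e ^ 2 - 1) / (2 * e) := by field_simp
  have a2 : (e + e⁻¹) / 2 = (e ^ 2 + 1) / (2 * e) := by field_simp
  have a3 : 1 - (e ^ 4)⁻¹ = (e ^ 4 - 1) / e ^ 4 := by field_simp
  rw [a1, a2, a3]
  field_simp
  ring

/-- the full sum over the integers -/
lemma full_sum {ℓ : ℝ} (hl : 0 < ℓ) {s : ℂ} (hs : 1 / 2 < s.re) :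
    HasSum (fun m : ℤ => Complex.exp (-(2 * s - 1) * ((|(m : ℝ) * ℓ / 2| : ℝ) : ℂ)) *
      (((|Real.sinh ((m : ℝ) * ℓ / 2)|)⁻¹ : ℝ) - ((Real.cosh ((m : ℝ) * ℓ / 2))⁻¹ : ℝ) : ℂ))
     (-1 + 8 * ∑' k : ℕ, Complex.exp (-(s + 2 * k + 1) * ℓ) / (1 - Complex.exp (-(s + 2 * k + 1) * ℓ))) := by
  have h := (dbl_swap hl hs).mul_left 4
  have h1 := h.congr_fun (fun n => term_eq hl s n)
  have h2 : HasSum (fun n : ℕ => Complex.exp (-(2 * s - 1) * ((|((n : ℕ) : ℝ) * ℓ / 2| : ℝ) : ℂ)) *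
      (((|Real.sinh (((n : ℕ) : ℝ) * ℓ / 2)|)⁻¹ : ℝ) - ((Real.cosh (((n : ℕ) : ℝ) * ℓ / 2))⁻¹ : ℝ) : ℂ))
      (-1 + 4 * ∑' k : ℕ, Complex.exp (-(s + 2 * k + 1) * ℓ) / (1 - Complex.exp (-(s + 2 * k + 1) * ℓ))) := by
    rw [← hasSum_nat_add_iff' 1]
    simpa using h1
  have h3 := HasSum.of_nat_of_neg_add_one (f := fun m : ℤ => Complex.exp (-(2 * s - 1) * ((|(m : ℝ) * ℓ / 2| : ℝ) : ℂ)) *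
      (((|Real.sinh ((m : ℝ) * ℓ / 2)|)⁻¹ : ℝ) - ((Real.cosh ((m : ℝ) * ℓ / 2))⁻¹ : ℝ) : ℂ)) 
      (h2.congr_fun (fun n => by simp)) (h1.congr_fun (fun n => by
        have : (((-((n : ℤ) + 1) : ℤ)) : ℝ) * ℓ / 2 = - (((n + 1 : ℕ) : ℝ) * ℓ / 2) := by push_cast; ring
        rw [this, abs_neg, Real.sinh_neg, abs_neg, Real.cosh_neg]))
  convert h3 using 1
  ring

lemma exp_int_summable {ℓ : ℝ} (hl : 0 < ℓ) : Summable (fun m : ℤ => Real.exp (-|(m : ℝ) * ℓ / 2|)) := by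
  have h1 : Summable (fun k : ℕ => Real.exp (-(ℓ / 2)) ^ k) :=
    summable_geometric_of_lt_one (Real.exp_pos _).le (by simpa using hl)
  have h2 : Summable (fun k : ℕ => Real.exp (-|(k : ℝ) * ℓ / 2|)) := by
    refine h1.congr fun k => ?_
    rw [abs_of_nonneg (by positivity), ← Real.exp_nat_mul]; congr 1; ring
  refine Summable.of_nat_of_neg (by simpa using h2) ?_
  refine h2.congr fun k => ?_
  congr 2
  rw [← abs_neg]; congr 1; push_cast; ring

lemma inv_cosh_le (θ : ℝ) : (Real.cosh θ)⁻¹ ≤ 2 * Real.exp (-|θ|) := by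
  rw [← Real.cosh_abs, Real.cosh_eq, Real.exp_neg]
  have := Real.exp_pos |θ|
  rw [inv_le_comm₀ (by positivity) (by positivity)]
  rw [mul_inv, inv_inv]
  have : 0 < (Real.exp |θ|)⁻¹ := by positivity
  linarith

lemma inv_sinh_le {ℓ : ℝ} (hl : 0 < ℓ) (m : ℤ) : 
    (|Real.sinh ((m : ℝ) * ℓ / 2)|)⁻¹ ≤ (2 / (1 - Real.exp (-ℓ))) * Real.exp (-|(m : ℝ) * ℓ / 2|) := by
  have hr : Real.exp (-ℓ) < 1 := by simpa using hl
  have hr' : 0 < 1 - Real.exp (-ℓ) := by linarith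
  rcases eq_or_ne m 0 with rfl | hm
  · simp; positivity
  rw [Real.abs_sinh]
  obtain ⟨θ, hθ⟩ : ∃ θ : ℝ, θ = |(m : ℝ) * ℓ / 2| := ⟨_, rfl⟩
  rw [← hθ]
  have h1 : (1:ℝ) ≤ |(m : ℝ)| := by exact_mod_cast Int.one_le_abs hm
  have h2 : ℓ ≤ 2 * θ := by
    rw [hθ, abs_div, abs_mul, abs_of_pos hl]; norm_num; nlinarith
  have h3 : Real.exp (-(2 * θ)) ≤ Real.exp (-ℓ) := Real.exp_le_exp.2 (by linarith)
  have hs : Real.sinh θ = Real.exp θ * (1 - Real.exp (-(2 * θ))) / 2 := by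
    rw [Real.sinh_eq, mul_sub, ← Real.exp_add]; ring_nf
  rw [hs, Real.exp_neg θ]
  have h0 := Real.exp_pos θ
  have : (2 / (1 - Real.exp (-ℓ))) * (Real.exp θ)⁻¹ = (Real.exp θ * (1 - Real.exp (-ℓ)) / 2)⁻¹ := by
    field_simp
  rw [this]
  gcongr

section main

variable {ℓ : ℝ} {s : ℂ}

lemma arg1_eq (m : ℤ) (x : ℝ) {y : ℝ} (hy : 0 < y) :
    ((x - Real.exp ((m : ℤ) * ℓ) * x) ^ 2
              + (y + Real.exp ((m : ℤ) * ℓ) * y) ^ 2) / (4 * Real.exp ((m : ℤ) * ℓ) * y ^ 2) =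
    Real.cosh ((m : ℝ) * ℓ / 2) ^ 2 + (|Real.sinh ((m : ℝ) * ℓ / 2)| / y * x) ^ 2 := by
  have h : Real.exp ((m : ℝ) * ℓ) = Real.exp ((m : ℝ) * ℓ / 2) ^ 2 := by
    rw [← Real.exp_nat_mul]; congr 1; push_cast; ring
  rw [mul_pow, div_pow, sq_abs, Real.cosh_eq, Real.sinh_eq, h, Real.exp_neg]
  have := Real.exp_pos ((m : ℝ) * ℓ / 2)
  generalize Real.exp ((m : ℝ) * ℓ / 2) = e at *
  field_simp
  ring

lemma arg2_eq (m : ℤ) (x : ℝ) {y : ℝ} (hy : 0 < y) :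
    ((x + Real.exp ((m : ℤ) * ℓ) * x) ^ 2
              + (y + Real.exp ((m : ℤ) * ℓ) * y) ^ 2) / (4 * Real.exp ((m : ℤ) * ℓ) * y ^ 2) =
    Real.cosh ((m : ℝ) * ℓ / 2) ^ 2 + (Real.cosh ((m : ℝ) * ℓ / 2) / y * x) ^ 2 := by
  have h : Real.exp ((m : ℝ) * ℓ) = Real.exp ((m : ℝ) * ℓ / 2) ^ 2 := by
    rw [← Real.exp_nat_mul]; congr 1; push_cast; ring
  rw [mul_pow, div_pow, Real.cosh_eq, h, Real.exp_neg]
  have := Real.exp_pos ((m : ℝ) * ℓ / 2)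
  generalize Real.exp ((m : ℝ) * ℓ / 2) = e at *
  field_simp
  ring

lemma cosh_sub_abs_sinh (θ : ℝ) : Real.cosh θ - |Real.sinh θ| = Real.exp (-|θ|) := by
  rw [Real.abs_sinh, ← Real.cosh_abs, Real.cosh_sub_sinh]

lemma lemE (θ : ℝ) (hs : 1 / 2 < s.re) {a : ℝ} (ha : 0 < a) :
    IntegrableOn (fun x : ℝ => greenH s (Real.cosh θ ^ 2 + (a * x) ^ 2)) (Set.Ioi 0) ∧
    ∫ x in Set.Ioi (0:ℝ), greenH s (Real.cosh θ ^ 2 + (a * x) ^ 2) = 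
      ((a⁻¹ : ℝ) : ℂ) * (Complex.exp (-(2 * s - 1) * ((|θ| : ℝ) : ℂ)) / (4 * (2 * s - 1))) ∧
    ∫ x in Set.Ioi (0:ℝ), ‖greenH s (Real.cosh θ ^ 2 + (a * x) ^ 2)‖ ≤ 
      a⁻¹ * (1 / (4 * (2 * s.re - 1))) := by
  have hσ : 0 < 2 * s.re - 1 := by linarith
  have h := lemD (C := Real.cosh θ) (S := |Real.sinh θ|) (Real.cosh_pos θ) (abs_nonneg _)
    (by rw [sq_abs, Real.cosh_sq]) (by rw [cosh_sub_abs_sinh]; positivity) hs ha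
  rw [cosh_sub_abs_sinh] at h
  refine ⟨h.1, ?_, ?_⟩
  · rw [h.2.1, Complex.ofReal_inv]
    congr 2
    rw [Complex.cpow_def_of_ne_zero (by exact_mod_cast (Real.exp_pos _).ne'), ← Complex.ofReal_log (Real.exp_pos _).le,
      Real.log_exp]
    congr 1; push_cast; ring
  · refine h.2.2.trans ?_
    gcongr
    apply Real.rpow_le_one (by positivity) _ hσ.le
    simp

/-- The first family of terms (with the `m = 0` term removed). -/
noncomputable def fam1 (ℓ : ℝ) (s : ℂ) (y : ℝ) (m : ℤ) (x : ℝ) : ℂ :=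
  if m = 0 then 0 else greenH s (Real.cosh ((m : ℝ) * ℓ / 2) ^ 2 + (|Real.sinh ((m : ℝ) * ℓ / 2)| / y * x) ^ 2)

noncomputable def fam2 (ℓ : ℝ) (s : ℂ) (y : ℝ) (m : ℤ) (x : ℝ) : ℂ :=
  greenH s (Real.cosh ((m : ℝ) * ℓ / 2) ^ 2 + (Real.cosh ((m : ℝ) * ℓ / 2) / y * x) ^ 2)

lemma fam1_props (hl : 0 < ℓ) (hs : 1 / 2 < s.re) {y : ℝ} (hy : 0 < y) (m : ℤ) :
    IntegrableOn (fam1 ℓ s y m) (Set.Ioi 0) ∧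
    ∫ x in Set.Ioi (0:ℝ), fam1 ℓ s y m x = 
      ((y * (|Real.sinh ((m : ℝ) * ℓ / 2)|)⁻¹ : ℝ) : ℂ) * (Complex.exp (-(2 * s - 1) * ((|(m : ℝ) * ℓ / 2| : ℝ) : ℂ)) / (4 * (2 * s - 1))) ∧
    ∫ x in Set.Ioi (0:ℝ), ‖fam1 ℓ s y m x‖ ≤ 
      (y * (|Real.sinh ((m : ℝ) * ℓ / 2)|)⁻¹) * (1 / (4 * (2 * s.re - 1))) := by
  rcases eq_or_ne m 0 with rfl | hm
  · have : fam1 ℓ s y 0 = fun _ => 0 := by ext x; simp [fam1]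
    rw [this]
    simp
  · have : fam1 ℓ s y m = fun x => greenH s (Real.cosh ((m : ℝ) * ℓ / 2) ^ 2 + (|Real.sinh ((m : ℝ) * ℓ / 2)| / y * x) ^ 2) := by
      ext x; simp [fam1, hm]
    rw [this]
    have h0 : (m : ℝ) * ℓ / 2 ≠ 0 := by
      have : (m : ℝ) ≠ 0 := by exact_mod_cast hm
      have := hl.ne'
      positivity
    have h1 : 0 < |Real.sinh ((m : ℝ) * ℓ / 2)| := abs_pos.2 (by rwa [Ne, Real.sinh_eq_zero])
    have h2 := lemE (s := s) ((m : ℝ) * ℓ / 2) hs (div_pos h1 hy)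
    rwa [inv_div, div_eq_mul_inv] at h2

lemma fam2_props (hs : 1 / 2 < s.re) {y : ℝ} (hy : 0 < y) (m : ℤ) :
    IntegrableOn (fam2 ℓ s y m) (Set.Ioi 0) ∧
    ∫ x in Set.Ioi (0:ℝ), fam2 ℓ s y m x = 
      ((y * (Real.cosh ((m : ℝ) * ℓ / 2))⁻¹ : ℝ) : ℂ) * (Complex.exp (-(2 * s - 1) * ((|(m : ℝ) * ℓ / 2| : ℝ) : ℂ)) / (4 * (2 * s - 1))) ∧
    ∫ x in Set.Ioi (0:ℝ), ‖fam2 ℓ s y m x‖ ≤ 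
      (y * (Real.cosh ((m : ℝ) * ℓ / 2))⁻¹) * (1 / (4 * (2 * s.re - 1))) := by
  have h2 := lemE (s := s) ((m : ℝ) * ℓ / 2) hs (div_pos (Real.cosh_pos ((m : ℝ) * ℓ / 2)) hy)
  rwa [inv_div, div_eq_mul_inv] at h2

lemma inner_eq (hl : 0 < ℓ) (hs : 1 / 2 < s.re) {y : ℝ} (hy : 0 < y) :
    ∫ x in Set.Ioi (0:ℝ),
        ((∑' m : {m : ℤ // m ≠ 0},
            greenH s (((x - Real.exp ((m : ℤ) * ℓ) * x) ^ 2
              + (y + Real.exp ((m : ℤ) * ℓ) * y) ^ 2) / (4 * Real.exp ((m : ℤ) * ℓ) * y ^ 2)))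
          - ∑' m : ℤ,
            greenH s (((x + Real.exp (m * ℓ) * x) ^ 2
              + (y + Real.exp (m * ℓ) * y) ^ 2) / (4 * Real.exp (m * ℓ) * y ^ 2)))
          / (y : ℂ) ^ 2 =
     ((y⁻¹ : ℝ) : ℂ) * ((-1 + 8 * ∑' k : ℕ, Complex.exp (-(s + 2 * k + 1) * ℓ) / (1 - Complex.exp (-(s + 2 * k + 1) * ℓ))) / (4 * (2 * s - 1))) := by
  have hσ : 0 < 2 * s.re - 1 := by linarith
  have p1 := fam1_props hl hs hy
  have p2 := fam2_props (ℓ := ℓ) hs hy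
  have hr : Real.exp (-ℓ) < 1 := by simpa using hl
  have hr' : 0 < 1 - Real.exp (-ℓ) := by linarith
  have s1 : Summable fun m : ℤ => ∫ x in Set.Ioi (0:ℝ), ‖fam1 ℓ s y m x‖ := by
    refine Summable.of_nonneg_of_le (fun m => integral_nonneg fun _ => norm_nonneg _)
      (fun m => le_trans (p1 m).2.2 (c := y * ((2 / (1 - Real.exp (-ℓ))) * Real.exp (-|(m : ℝ) * ℓ / 2|)) * (1 / (4 * (2 * s.re - 1)))) ?_)
      ((((exp_int_summable hl).mul_left _).mul_left _).mul_right _)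
    gcongr
    exact inv_sinh_le hl m
  have s2 : Summable fun m : ℤ => ∫ x in Set.Ioi (0:ℝ), ‖fam2 ℓ s y m x‖ := by
    refine Summable.of_nonneg_of_le (fun m => integral_nonneg fun _ => norm_nonneg _)
      (fun m => le_trans (p2 m).2.2 (c := y * (2 * Real.exp (-|(m : ℝ) * ℓ / 2|)) * (1 / (4 * (2 * s.re - 1)))) ?_)
      ((((exp_int_summable hl).mul_left _).mul_left _).mul_right _)
    gcongr
    exact inv_cosh_le _
  have a1 := ae_summable_of_integral (fun m => (p1 m).1) s1
  have a2 := ae_summable_of_integral (fun m => (p2 m).1) s2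
  have s3 : Summable fun m : ℤ => ∫ x in Set.Ioi (0:ℝ), ‖fam1 ℓ s y m x - fam2 ℓ s y m x‖ := by
    refine Summable.of_nonneg_of_le (fun m => integral_nonneg fun _ => norm_nonneg _) (fun m => ?_) (s1.add s2)
    rw [← integral_add (p1 m).1.norm (p2 m).1.norm]
    exact integral_mono ((p1 m).1.sub (p2 m).1).norm ((p1 m).1.norm.add (p2 m).1.norm) (fun x => norm_sub_le _ _)
  have hsum := hasSum_integral_of_summable_integral_norm (fun m => (p1 m).1.sub (p2 m).1) s3
  rw [integral_div]
  have hae : ∫ x in Set.Ioi (0:ℝ),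
        ((∑' m : {m : ℤ // m ≠ 0},
            greenH s (((x - Real.exp ((m : ℤ) * ℓ) * x) ^ 2
              + (y + Real.exp ((m : ℤ) * ℓ) * y) ^ 2) / (4 * Real.exp ((m : ℤ) * ℓ) * y ^ 2)))
          - ∑' m : ℤ,
            greenH s (((x + Real.exp (m * ℓ) * x) ^ 2
              + (y + Real.exp (m * ℓ) * y) ^ 2) / (4 * Real.exp (m * ℓ) * y ^ 2))) =
      ∫ x in Set.Ioi (0:ℝ), ∑' m : ℤ, (fam1 ℓ s y m x - fam2 ℓ s y m x) := by
    refine integral_congr_ae ?_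
    filter_upwards [a1, a2] with x h1 h2
    rw [h1.tsum_sub h2]
    congr 1
    · have hsupp : Function.support (fun m : ℤ => fam1 ℓ s y m x) ⊆ {m : ℤ | m ≠ 0} := by
        intro m hm h0
        apply hm
        simp [fam1, h0]
      rw [← tsum_subtype_eq_of_support_subset hsupp]
      refine tsum_congr fun m => ?_
      rw [arg1_eq _ _ hy, fam1, if_neg m.2]
    · refine tsum_congr fun m => ?_
      rw [arg2_eq _ _ hy, fam2]
  rw [hae]
  have hfull := ((full_sum hl hs).div_const (4 * (2 * s - 1))).mul_left ((y : ℝ) : ℂ)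
  have hEq : (fun m : ℤ => ∫ x in Set.Ioi (0:ℝ), (fam1 ℓ s y m - fam2 ℓ s y m) x) = fun m : ℤ => ((y : ℝ) : ℂ) * (Complex.exp (-(2 * s - 1) * ((|(m : ℝ) * ℓ / 2| : ℝ) : ℂ)) *
      (((|Real.sinh ((m : ℝ) * ℓ / 2)|)⁻¹ : ℝ) - ((Real.cosh ((m : ℝ) * ℓ / 2))⁻¹ : ℝ) : ℂ) / (4 * (2 * s - 1))) := by
    ext m
    rw [integral_sub' (p1 m).1 (p2 m).1, (p1 m).2.1, (p2 m).2.1]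
    push_cast
    ring
  have hval := (hEq ▸ hsum).unique hfull
  have hy' : (y : ℂ) ≠ 0 := by exact_mod_cast hy.ne'
  refine (congrArg (· / (y : ℂ) ^ 2) hval).trans ?_
  generalize (∑' k : ℕ, Complex.exp (-(s + 2 * k + 1) * ℓ) / (1 - Complex.exp (-(s + 2 * k + 1) * ℓ))) = T
  push_cast
  field_simp

end main

/-- Proposition 2.3 of the paper: `Φ_F(s) = Z_F'(s)/Z_F(s)` for the funnel of boundary
length `ℓ`, written out via the method of images.  For `ℓ > 0` and `Re s > 1/2`,
`(2s-1) ∫₁^{e^ℓ} ∫₀^∞ [ ∑_{m≠0} g_s(((x - e^{mℓ}x)² + (y + e^{mℓ}y)²)/(4e^{mℓ}y²))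
  - ∑_{m∈ℤ} g_s(((x + e^{mℓ}x)² + (y + e^{mℓ}y)²)/(4e^{mℓ}y²)) ] y⁻² dx dy
  = -ℓ/4 + ∑_{k=0}^∞ 2ℓ e^{-(s+2k+1)ℓ}/(1 - e^{-(s+2k+1)ℓ})`. -/
theorem funnel_regularized_trace (ℓ : ℝ) (hl : 0 < ℓ) (s : ℂ) (hs : 1 / 2 < s.re) :
    (2 * s - 1) * ∫ y in Set.Ioo (1:ℝ) (Real.exp ℓ), ∫ x in Set.Ioi (0:ℝ),
        ((∑' m : {m : ℤ // m ≠ 0},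
            greenH s (((x - Real.exp ((m : ℤ) * ℓ) * x) ^ 2
              + (y + Real.exp ((m : ℤ) * ℓ) * y) ^ 2) / (4 * Real.exp ((m : ℤ) * ℓ) * y ^ 2)))
          - ∑' m : ℤ,
            greenH s (((x + Real.exp (m * ℓ) * x) ^ 2
              + (y + Real.exp (m * ℓ) * y) ^ 2) / (4 * Real.exp (m * ℓ) * y ^ 2)))
          / (y : ℂ) ^ 2 =
      -(ℓ : ℂ) / 4 + ∑' k : ℕ, 2 * (ℓ : ℂ) * Complex.exp (-(s + 2 * k + 1) * ℓ)
          / (1 - Complex.exp (-(s + 2 * k + 1) * ℓ)) := by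
  have h1 : (1:ℝ) < Real.exp ℓ := by simpa using hl
  rw [setIntegral_congr_fun measurableSet_Ioo (fun y hy => inner_eq hl hs (y := y) (lt_trans one_pos hy.1)),
    integral_mul_const, integral_complex_ofReal, ← integral_Ioc_eq_integral_Ioo, ← intervalIntegral.integral_of_le h1.le,
    integral_inv_of_pos one_pos (Real.exp_pos _), div_one, Real.log_exp]
  have h3 : 2 * s - 1 ≠ 0 := by
    intro h
    have := congrArg Complex.re h
    simp at this hs; linarith
  simp only [mul_div_assoc]
  rw [tsum_mul_left]
  generalize (∑' k : ℕ, Complex.exp (-(s + 2 * k + 1) * ℓ) / (1 - Complex.exp (-(s + 2 * k + 1) * ℓ))) = T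
  field_simp
  ring
end

section
/- Let ℓ > 0, let m be a nonzero integer, let ε ∈ {+1, −1}, and let s be a complex number with Re(s) > 1/2. Then (2s−1) ∫₁^{e^ℓ} ∫₀^∞ g_s( ((1 − ε e^{mℓ})² x² + (1 + e^{mℓ})² y²)/(4 e^{mℓ} y²) ) y^{-2} dx dy = (ℓ/2) · e^{−s|m|ℓ}/(1 − ε e^{−|m|ℓ}). -/
open MeasureTheory

/-- Continuous unimodular loops all of whose positive powers have mean zero. -/
structure GoodLoop (u : ℝ → ℂ) : Prop where
  cont : Continuous u
  norm : ∀ θ, ‖u θ‖ = 1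
  mean : ∀ n : ℕ, n ≠ 0 → ∫ θ in (0:ℝ)..2 * Real.pi, u θ ^ n = 0

lemma GoodLoop.moment {u : ℝ → ℂ} (h : GoodLoop u) (k l : ℕ) :
    ∫ θ in (0:ℝ)..2 * Real.pi, u θ ^ k * (starRingEnd ℂ (u θ)) ^ l
      = if k = l then (2 * Real.pi : ℂ) else 0 := by
  have h1 : ∀ θ, u θ * starRingEnd ℂ (u θ) = 1 := fun θ => by
    rw [Complex.mul_conj, Complex.normSq_eq_norm_sq, h.norm]; simp
  rcases lt_trichotomy k l with hkl | hkl | hkl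
  · obtain ⟨d, rfl⟩ := Nat.exists_eq_add_of_lt hkl
    have : ∀ θ, u θ ^ k * (starRingEnd ℂ (u θ)) ^ (k + d + 1)
        = starRingEnd ℂ (u θ ^ (d + 1)) := fun θ => by
      rw [add_assoc, pow_add, ← mul_assoc, ← mul_pow, h1, one_pow, one_mul, map_pow]
    simp_rw [this]
    have h2pi : (0:ℝ) ≤ 2 * Real.pi := Real.two_pi_pos.le
    have hm := h.mean (d + 1) (by omega)
    rw [intervalIntegral.integral_of_le h2pi] at hm
    rw [if_neg (by omega), intervalIntegral.integral_of_le h2pi, integral_conj, hm, map_zero]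
  · subst hkl
    simp_rw [← mul_pow, h1]
    simp
  · obtain ⟨d, rfl⟩ := Nat.exists_eq_add_of_lt hkl
    have : ∀ θ, u θ ^ (l + d + 1) * (starRingEnd ℂ (u θ)) ^ l
        = u θ ^ (d + 1) := fun θ => by
      rw [add_assoc, pow_add, mul_comm (u θ ^ l), mul_assoc, ← mul_pow, h1, one_pow, mul_one]
    simp_rw [this]
    rw [if_neg (by omega), h.mean _ (by omega)]

lemma GoodLoop.pow_re {u v : ℝ → ℂ} (hu : GoodLoop u) (hv : GoodLoop v) (n : ℕ) :
    ∫ θ in (0:ℝ)..2 * Real.pi, (u θ).re ^ n = ∫ θ in (0:ℝ)..2 * Real.pi, (v θ).re ^ n := by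
  have key : ∀ w : ℝ → ℂ, GoodLoop w →
      ((∫ θ in (0:ℝ)..2 * Real.pi, (w θ).re ^ n : ℝ) : ℂ)
      = ∑ k ∈ Finset.range (n + 1), (if k = n - k then (2 * Real.pi : ℂ) else 0)
          * ((n.choose k : ℂ) * (1 / 2) ^ n) := by
    intro w hw
    have hc := hw.cont
    rw [← intervalIntegral.integral_ofReal]
    have : ∀ θ, (((w θ).re ^ n : ℝ) : ℂ) = ∑ k ∈ Finset.range (n + 1),
        (w θ ^ k * (starRingEnd ℂ (w θ)) ^ (n - k)) * ((n.choose k : ℂ) * (1 / 2) ^ n) := by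
      intro θ
      rw [Complex.ofReal_pow, Complex.re_eq_add_conj, div_eq_mul_one_div, mul_pow, add_pow,
        Finset.sum_mul]
      exact Finset.sum_congr rfl fun k _ => by ring
    simp_rw [this]
    rw [intervalIntegral.integral_finsetSum]
    · refine Finset.sum_congr rfl fun k _ => ?_
      rw [intervalIntegral.integral_mul_const, hw.moment]
    · intro k _
      apply Continuous.intervalIntegrable
      have : Continuous fun θ => starRingEnd ℂ (w θ) := Complex.continuous_conj.comp hc
      fun_prop
  have := (key u hu).trans (key v hv).symm
  exact_mod_cast this

lemma GoodLoop.poly_re {u v : ℝ → ℂ} (hu : GoodLoop u) (hv : GoodLoop v) (p : Polynomial ℝ) :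
    ∫ θ in (0:ℝ)..2 * Real.pi, p.eval (u θ).re
      = ∫ θ in (0:ℝ)..2 * Real.pi, p.eval (v θ).re := by
  have key : ∀ w : ℝ → ℂ, GoodLoop w → ∫ θ in (0:ℝ)..2 * Real.pi, p.eval (w θ).re
      = ∑ i ∈ Finset.range (p.natDegree + 1), p.coeff i *
        ∫ θ in (0:ℝ)..2 * Real.pi, (w θ).re ^ i := by
    intro w hw
    have hc : Continuous fun θ => (w θ).re := Complex.continuous_re.comp hw.cont
    simp_rw [Polynomial.eval_eq_sum_range]
    rw [intervalIntegral.integral_finsetSum]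
    · simp_rw [intervalIntegral.integral_const_mul]
    · intro k _
      apply Continuous.intervalIntegrable
      fun_prop
  rw [key u hu, key v hv]
  exact Finset.sum_congr rfl fun i _ => by rw [hu.pow_re hv]

lemma GoodLoop.re_mem {u : ℝ → ℂ} (hu : GoodLoop u) (θ : ℝ) : (u θ).re ∈ Set.Icc (-1:ℝ) 1 := by
  have := Complex.abs_re_le_norm (u θ)
  rw [hu.norm] at this
  exact abs_le.mp this

lemma GoodLoop.real {u v : ℝ → ℂ} (hu : GoodLoop u) (hv : GoodLoop v) (G : ℝ → ℝ)
    (hG : Continuous G) :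
    ∫ θ in (0:ℝ)..2 * Real.pi, G (u θ).re = ∫ θ in (0:ℝ)..2 * Real.pi, G (v θ).re := by
  have h2pi : 0 < 2 * Real.pi := Real.two_pi_pos
  by_contra hne
  have hd : 0 < |(∫ θ in (0:ℝ)..2 * Real.pi, G (u θ).re)
      - ∫ θ in (0:ℝ)..2 * Real.pi, G (v θ).re| := abs_pos.mpr (sub_ne_zero.mpr hne)
  set d := |(∫ θ in (0:ℝ)..2 * Real.pi, G (u θ).re)
      - ∫ θ in (0:ℝ)..2 * Real.pi, G (v θ).re| with hdd
  obtain ⟨p, hp⟩ := exists_polynomial_near_of_continuousOn (-1) 1 G hG.continuousOn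
    (d / (4 * (2 * Real.pi))) (by positivity)
  have key : ∀ w : ℝ → ℂ, GoodLoop w → |(∫ θ in (0:ℝ)..2 * Real.pi, p.eval (w θ).re)
      - ∫ θ in (0:ℝ)..2 * Real.pi, G (w θ).re| ≤ d / 4 := by
    intro w hw
    have hc : Continuous fun θ => (w θ).re := Complex.continuous_re.comp hw.cont
    rw [← intervalIntegral.integral_sub]
    · rw [← Real.norm_eq_abs]
      refine (intervalIntegral.norm_integral_le_of_norm_le_const
        (C := d / (4 * (2 * Real.pi))) ?_).trans ?_
      · intro x _
        exact (hp _ (hw.re_mem x)).le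
      · rw [sub_zero, abs_of_pos h2pi]
        apply le_of_eq
        field_simp
    · exact (p.continuous.comp hc).intervalIntegrable _ _
    · exact (hG.comp hc).intervalIntegrable _ _
  have h1 := abs_le.mp (key u hu)
  have h2 := abs_le.mp (key v hv)
  have h3 := hu.poly_re hv p
  have : d ≤ d / 2 := by
    rw [hdd, abs_le, ← hdd]
    constructor <;> linarith [h1.1, h1.2, h2.1, h2.2]
  linarith

lemma GoodLoop.complex {u v : ℝ → ℂ} (hu : GoodLoop u) (hv : GoodLoop v) (G : ℝ → ℂ)
    (hG : Continuous G) :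
    ∫ θ in (0:ℝ)..2 * Real.pi, G (u θ).re = ∫ θ in (0:ℝ)..2 * Real.pi, G (v θ).re := by
  have key : ∀ w : ℝ → ℂ, GoodLoop w → ∫ θ in (0:ℝ)..2 * Real.pi, G (w θ).re
      = ((∫ θ in (0:ℝ)..2 * Real.pi, (G (w θ).re).re : ℝ) : ℂ)
        + ((∫ θ in (0:ℝ)..2 * Real.pi, (G (w θ).re).im : ℝ) : ℂ) * Complex.I := by
    intro w hw
    have hc : Continuous fun θ => G (w θ).re := hG.comp (Complex.continuous_re.comp hw.cont)
    have hi := hc.intervalIntegrable (μ := volume) 0 (2 * Real.pi)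
    have e1 := Complex.reCLM.intervalIntegral_comp_comm hi
    have e2 := Complex.imCLM.intervalIntegral_comp_comm hi
    simp only [Complex.reCLM_apply, Complex.imCLM_apply] at e1 e2
    rw [e1, e2, Complex.re_add_im]
  rw [key u hu, key v hv, hu.real hv (fun x => (G x).re) (Complex.continuous_re.comp hG),
    hu.real hv (fun x => (G x).im) (Complex.continuous_im.comp hG)]

lemma goodLoop_of_holo (f : ℂ → ℂ) (hf : DifferentiableOn ℂ f (Metric.closedBall 0 1))
    (h0 : f 0 = 0) (h1 : ∀ z, ‖z‖ = 1 → ‖f z‖ = 1) : GoodLoop fun θ => f (circleMap 0 1 θ) where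
  cont := hf.continuousOn.comp_continuous (continuous_circleMap 0 1)
    fun θ => by simp [Metric.mem_closedBall]
  norm θ := h1 _ (by simp)
  mean n hn := by
    have hd : DiffContOnCl ℂ (fun z => f z ^ n) (Metric.ball 0 |1|) := by
      apply DifferentiableOn.diffContOnCl
      rw [abs_one, closure_ball _ one_ne_zero]
      exact hf.pow n
    have := hd.circleAverage
    rw [Real.circleAverage_def, h0, zero_pow hn] at this
    rcases smul_eq_zero.mp this with h | h
    · exact absurd h (by positivity)
    · exact h

lemma blaschke_goodLoop (a : ℝ) (ha : 0 < a) (ha1 : a < 1) :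
    GoodLoop fun θ => circleMap 0 1 θ * (circleMap 0 1 θ - a) / (1 - a * circleMap 0 1 θ) := by
  have hne : ∀ z : ℂ, ‖z‖ ≤ 1 → (1 - a * z : ℂ) ≠ 0 := by
    intro z hz h
    have : (a * z : ℂ) = 1 := (sub_eq_zero.mp h).symm
    have h2 : ‖(a * z : ℂ)‖ = 1 := by rw [this]; simp
    rw [norm_mul, Complex.norm_real, Real.norm_eq_abs, abs_of_pos ha] at h2
    nlinarith
  refine goodLoop_of_holo (fun z => z * (z - a) / (1 - a * z)) ?_ (by simp) ?_
  · intro z hz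
    apply DifferentiableAt.differentiableWithinAt
    have := hne z (by simpa using hz)
    fun_prop (disch := assumption)
  · intro z hz
    have h3 : ‖z - a‖ = ‖1 - a * z‖ := by
      have : ‖z - a‖ ^ 2 = ‖1 - a * z‖ ^ 2 := by
        have hz2 : Complex.normSq z = 1 := by rw [Complex.normSq_eq_norm_sq, hz]; norm_num
        rw [← Complex.normSq_eq_norm_sq, ← Complex.normSq_eq_norm_sq]
        simp only [Complex.normSq_apply] at hz2 ⊢
        simp
        linear_combination (1 - a ^ 2) * hz2
      exact (pow_left_inj₀ (norm_nonneg _) (norm_nonneg _) two_ne_zero).mp this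
    rw [norm_div, norm_mul, hz, one_mul, h3, div_self]
    exact norm_ne_zero_iff.mpr (hne z hz.le)

lemma id_goodLoop : GoodLoop fun θ => circleMap 0 1 θ :=
  goodLoop_of_holo (fun z => z) differentiableOn_id rfl fun _ h => h

lemma half_symm (h : ℝ → ℂ) (hc : Continuous h) (hs : ∀ x, h (2 * Real.pi - x) = h x) :
    ∫ θ in (0:ℝ)..2 * Real.pi, h θ = 2 * ∫ θ in (0:ℝ)..Real.pi, h θ := by
  rw [← intervalIntegral.integral_add_adjacent_intervals (b := Real.pi)
    (hc.intervalIntegrable _ _) (hc.intervalIntegrable _ _), two_mul]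
  have := intervalIntegral.integral_comp_sub_left h (a := 0) (b := Real.pi) (2 * Real.pi)
  simp_rw [hs] at this
  rw [this]
  ring_nf

lemma denom_pos (a : ℝ) (ha : 0 < a) (ha1 : a < 1) (θ : ℝ) :
    0 < 1 + a ^ 2 - 2 * a * Real.cos θ := by
  nlinarith [Real.cos_le_one θ, mul_le_mul_of_nonneg_left (Real.cos_le_one θ) ha.le,
    mul_pos (sub_pos.mpr ha1) (sub_pos.mpr ha1)]

lemma blaschke_re (a : ℝ) (ha : 0 < a) (ha1 : a < 1) (θ : ℝ) :
    (1 - (circleMap 0 1 θ * (circleMap 0 1 θ - a) / (1 - a * circleMap 0 1 θ) : ℂ).re) / 2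
      = Real.sin θ ^ 2 / (1 + a ^ 2 - 2 * a * Real.cos θ) := by
  have hD := denom_pos a ha ha1 θ
  have hz : circleMap 0 1 θ = ⟨Real.cos θ, Real.sin θ⟩ := by
    apply Complex.ext <;> simp [circleMap, Complex.exp_ofReal_mul_I_re, Complex.exp_ofReal_mul_I_im]
  have hcs := Real.sin_sq_add_cos_sq θ
  have hn : Complex.normSq (1 - a * circleMap 0 1 θ) = 1 + a ^ 2 - 2 * a * Real.cos θ := by
    rw [hz, Complex.normSq_apply]
    simp
    linear_combination a ^ 2 * hcs
  have hD' := hD.ne'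
  rw [Complex.div_re, hn, hz]
  simp
  rw [← add_div, eq_div_iff hD', div_mul_eq_mul_div, div_eq_iff two_ne_zero, sub_mul,
    div_mul_cancel₀ _ hD']
  linear_combination (a * Real.cos θ - a ^ 2 - 1) * hcs

lemma circle_identity (a : ℝ) (ha : 0 < a) (ha1 : a < 1) (F : ℝ → ℂ) (hF : Continuous F) :
    ∫ θ in (0:ℝ)..Real.pi, F (Real.sin θ ^ 2 / (1 + a ^ 2 - 2 * a * Real.cos θ))
      = ∫ θ in (0:ℝ)..Real.pi, F ((1 - Real.cos θ) / 2) := by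
  have h := (blaschke_goodLoop a ha ha1).complex id_goodLoop (fun x => F ((1 - x) / 2))
    (hF.comp (by fun_prop))
  simp_rw [blaschke_re a ha ha1] at h
  have hz : ∀ θ, (circleMap 0 1 θ).re = Real.cos θ := fun θ => by
    simp [circleMap, Complex.exp_ofReal_mul_I_re]
  simp_rw [hz] at h
  have hne : ∀ θ, 1 + a ^ 2 - 2 * a * Real.cos θ ≠ 0 := fun θ => (denom_pos a ha ha1 θ).ne'
  rw [half_symm, half_symm] at h
  · exact mul_left_cancel₀ two_ne_zero h
  · exact hF.comp (by fun_prop)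
  · intro x; simp
  · exact hF.comp (by fun_prop (disch := exact hne _))
  · intro x; simp [Real.cos_two_pi_sub, Real.sin_two_pi_sub]

lemma cp {x : ℝ} (hx : 0 < x) (z : ℂ) : (x : ℂ) ^ z = Complex.exp (Real.log x * z) := by
  rw [Complex.cpow_def_of_ne_zero (by exact_mod_cast hx.ne'), Complex.ofReal_log hx.le]

lemma subst_cos (h : ℝ → ℂ) : ∫ t in Set.Ioo (0:ℝ) 1, h t
    = ∫ θ in Set.Ioo (0:ℝ) Real.pi, ((Real.sin θ / 2 : ℝ) : ℂ) * h ((1 + Real.cos θ) / 2) := by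
  have him : (fun θ => (1 + Real.cos θ) / 2) '' Set.Ioo (0:ℝ) Real.pi = Set.Ioo (0:ℝ) 1 := by
    ext t
    constructor
    · rintro ⟨θ, hθ, rfl⟩
      have h1 : Real.cos θ < Real.cos 0 :=
        Real.strictAntiOn_cos ⟨le_rfl, Real.pi_pos.le⟩ ⟨hθ.1.le, hθ.2.le⟩ hθ.1
      have h2 : Real.cos Real.pi < Real.cos θ :=
        Real.strictAntiOn_cos ⟨hθ.1.le, hθ.2.le⟩ ⟨Real.pi_pos.le, le_rfl⟩ hθ.2
      simp only [Real.cos_zero, Real.cos_pi] at h1 h2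
      constructor <;> simp <;> linarith
    · intro ht
      refine ⟨Real.arccos (2 * t - 1), ⟨?_, ?_⟩, ?_⟩
      · rw [Real.arccos_pos]; linarith [ht.2]
      · refine lt_of_le_of_ne (Real.arccos_le_pi _) fun h => ?_
        rw [Real.arccos_eq_pi] at h; linarith [ht.1]
      · simp only
        rw [Real.cos_arccos (by linarith [ht.1]) (by linarith [ht.2])]; ring
  rw [← him, integral_image_eq_integral_abs_deriv_smul measurableSet_Ioo
    (f' := fun θ => - Real.sin θ / 2)]
  · refine setIntegral_congr_fun measurableSet_Ioo fun θ hθ => ?_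
    have := Real.sin_pos_of_mem_Ioo hθ
    rw [Complex.real_smul, abs_div, abs_neg, abs_of_pos this, abs_two]
  · intro θ _
    have := ((Real.hasDerivAt_cos θ).const_add 1).div_const 2
    exact this.hasDerivWithinAt
  · intro x hx y hy hxy
    apply Real.injOn_cos ⟨hx.1.le, hx.2.le⟩ ⟨hy.1.le, hy.2.le⟩
    simp only at hxy
    linarith

lemma K_formula (a : ℝ) (ha : 0 < a) (ha1 : a < 1) (s : ℂ) (hs : 1 / 2 < s.re) :
    ∫ t in Set.Ioo (0:ℝ) 1, (t : ℂ) ^ (s - 1) * ((1 : ℂ) - (t : ℂ)) ^ (s - 1) *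
        ((((1 + a) ^ 2 / (4 * a) - t : ℝ)) : ℂ) ^ (1 / 2 - s)
      = (a : ℂ) ^ (s - 1 / 2) * Complex.betaIntegral (1 / 2) s := by
  have hF : Continuous fun x : ℝ => (x : ℂ) ^ (s - 1 / 2) :=
    Complex.continuous_ofReal_cpow_const (by simp; linarith)
  have hci := circle_identity a ha ha1 _ hF
  rw [intervalIntegral.integral_of_le Real.pi_pos.le, intervalIntegral.integral_of_le Real.pi_pos.le,
    integral_Ioc_eq_integral_Ioo, integral_Ioc_eq_integral_Ioo] at hci
  have hbasic : ∀ θ ∈ Set.Ioo (0:ℝ) Real.pi, ∃ t : ℝ, 0 < t ∧ 0 < 1 - t ∧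
      (1 + Real.cos θ) / 2 = t ∧ (1 - Real.cos θ) / 2 = 1 - t ∧ 
      Real.log (Real.sin θ / 2) = (Real.log t + Real.log (1 - t)) / 2 ∧ 0 < Real.sin θ / 2 ∧
      Real.sin θ ^ 2 = 4 * (t * (1 - t)) := by
    intro θ hθ
    have hsin := Real.sin_pos_of_mem_Ioo hθ
    have hsc := Real.sin_sq_add_cos_sq θ
    have h1 : 0 < (1 + Real.cos θ) / 2 := by
      have : -1 < Real.cos θ := by nlinarith [Real.neg_one_le_cos θ]
      linarith
    have h2 : 0 < 1 - (1 + Real.cos θ) / 2 := by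
      have : Real.cos θ < 1 := by nlinarith [Real.cos_le_one θ]
      linarith
    have h3 : Real.sin θ ^ 2 = 4 * ((1 + Real.cos θ) / 2 * (1 - (1 + Real.cos θ) / 2)) := by
      linear_combination hsc
    refine ⟨_, h1, h2, rfl, by ring, ?_, by positivity, h3⟩
    rw [← Real.log_mul h1.ne' h2.ne']
    have : (1 + Real.cos θ) / 2 * (1 - (1 + Real.cos θ) / 2) = (Real.sin θ / 2) ^ 2 := by
      linear_combination (-1/4) * h3
    rw [this, Real.log_pow]
    push_cast; ring
  have hB : Complex.betaIntegral (1 / 2) s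
      = ∫ θ in Set.Ioo (0:ℝ) Real.pi, (((1 - Real.cos θ) / 2 : ℝ) : ℂ) ^ (s - 1 / 2) := by
    rw [Complex.betaIntegral, intervalIntegral.integral_of_le zero_le_one,
      integral_Ioc_eq_integral_Ioo, subst_cos]
    refine setIntegral_congr_fun measurableSet_Ioo fun θ hθ => ?_
    obtain ⟨t, h0, h1, e1, e2, e3, e4, e5⟩ := hbasic θ hθ
    rw [e1, e2]
    have : (1 - t : ℂ) = ((1 - t : ℝ) : ℂ) := by push_cast; rfl
    rw [this, cp h0, cp h1, cp h1]
    rw [← Real.exp_log e4, e3, Complex.ofReal_exp, ← Complex.exp_add, ← Complex.exp_add]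
    congr 1
    push_cast
    ring
  rw [hB, ← hci, ← integral_const_mul, subst_cos]
  refine setIntegral_congr_fun measurableSet_Ioo fun θ hθ => ?_
  obtain ⟨t, h0, h1, e1, e2, e3, e4, e5⟩ := hbasic θ hθ
  have hD := denom_pos a ha ha1 θ
  have hc : Real.cos θ = 2 * t - 1 := by linarith
  have h4 : 0 < (1 + a) ^ 2 / (4 * a) - t := by
    have : (1 + a) ^ 2 / (4 * a) - t = (1 + a ^ 2 - 2 * a * Real.cos θ) / (4 * a) := by
      rw [hc]; field_simp; ring
    rw [this]; positivity
  have h5 : Real.sin θ ^ 2 / (1 + a ^ 2 - 2 * a * Real.cos θ)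
      = t * (1 - t) / (a * ((1 + a) ^ 2 / (4 * a) - t)) := by
    have : 1 + a ^ 2 - 2 * a * Real.cos θ = 4 * (a * ((1 + a) ^ 2 / (4 * a) - t)) := by
      rw [hc]; field_simp; ring
    rw [this, e5, mul_div_mul_left _ _ (by norm_num)]
  have h6 : Real.log (Real.sin θ ^ 2 / (1 + a ^ 2 - 2 * a * Real.cos θ))
      = Real.log t + Real.log (1 - t) - (Real.log a + Real.log ((1 + a) ^ 2 / (4 * a) - t)) := by
    rw [h5, Real.log_div (by positivity) (by positivity), Real.log_mul h0.ne' h1.ne',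
      Real.log_mul ha.ne' h4.ne']
  have h7 : 0 < Real.sin θ ^ 2 / (1 + a ^ 2 - 2 * a * Real.cos θ) := by
    rw [h5]; positivity
  rw [e1]
  have : (1 - t : ℂ) = ((1 - t : ℝ) : ℂ) := by push_cast; rfl
  rw [this, cp h0, cp h1, cp h4, cp ha, cp h7, h6]
  rw [← Real.exp_log e4, e3, Complex.ofReal_exp]
  simp only [← Complex.exp_add]
  congr 1
  push_cast
  ring

lemma C_formula (s : ℂ) (hs : 1 / 2 < s.re) :
    ∫ v in Set.Ioi (0:ℝ), ((v ^ 2 + 1 : ℝ) : ℂ) ^ (-s)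
      = 1 / 2 * Complex.betaIntegral (s - 1 / 2) (1 / 2) := by
  have him : (fun v : ℝ => (v ^ 2 + 1)⁻¹) '' Set.Ioi (0:ℝ) = Set.Ioo (0:ℝ) 1 := by
    ext t
    constructor
    · rintro ⟨v, hv, rfl⟩
      have hv : 0 < v := hv
      exact ⟨by positivity, inv_lt_one_of_one_lt₀ (by nlinarith)⟩
    · intro ht
      have h1 : 1 < t⁻¹ := (one_lt_inv₀ ht.1).mpr ht.2
      refine ⟨Real.sqrt (t⁻¹ - 1), Real.sqrt_pos.mpr (by linarith), ?_⟩
      simp only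
      rw [Real.sq_sqrt (by linarith)]
      simp
  rw [Complex.betaIntegral, intervalIntegral.integral_of_le zero_le_one,
      integral_Ioc_eq_integral_Ioo, ← him, integral_image_eq_integral_abs_deriv_smul
      measurableSet_Ioi (f' := fun v => - (2 * v) / (v ^ 2 + 1) ^ 2), ← integral_const_mul]
  · refine setIntegral_congr_fun measurableSet_Ioi fun v hv => ?_
    have hv : 0 < v := hv
    have hp : 0 < v ^ 2 + 1 := by positivity
    have e1 : (1 : ℂ) - (((v ^ 2 + 1)⁻¹ : ℝ) : ℂ) = ((v ^ 2 / (v ^ 2 + 1) : ℝ) : ℂ) := by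
      rw [← Complex.ofReal_one, ← Complex.ofReal_sub]
      congr 1
      field_simp
      ring
    have e2 : |-(2 * v) / (v ^ 2 + 1) ^ 2| = 2 * Real.exp (Real.log v - 2 * Real.log (v ^ 2 + 1)) := by
      rw [Real.exp_sub, Real.exp_log hv, two_mul (Real.log _), Real.exp_add, Real.exp_log hp, abs_div,
        abs_neg, abs_of_pos (by positivity : 0 < 2 * v),
        abs_of_pos (by positivity : 0 < (v ^ 2 + 1) ^ 2)]
      ring
    rw [e1, e2, cp hp, cp (by positivity), cp (by positivity), Real.log_inv,
      Real.log_div (by positivity) hp.ne', Real.log_pow, Complex.real_smul, Complex.ofReal_mul,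
      Complex.ofReal_exp]
    rw [← Complex.exp_add, mul_assoc, ← Complex.exp_add, ← mul_assoc]
    norm_num
    ring_nf
  · intro v _
    have hp : v ^ 2 + 1 ≠ 0 := by positivity
    have := ((hasDerivAt_pow 2 v).add_const 1).inv hp
    refine HasDerivAt.hasDerivWithinAt ?_
    have e : -((2 : ℕ) * v ^ (2 - 1)) / (v ^ 2 + 1) ^ 2 = -(2 * v) / (v ^ 2 + 1) ^ 2 := by norm_num
    rw [e] at this
    exact this
  · intro x hx y hy hxy
    have hx : 0 < x := hx
    have hy : 0 < y := hy
    have hxy := add_right_cancel (inv_injective hxy)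
    exact (pow_left_inj₀ hx.le hy.le two_ne_zero).mp hxy

lemma C_scaled (s : ℂ) (b : ℝ) (hb : 0 < b) :
    ∫ v in Set.Ioi (0:ℝ), ((v ^ 2 + b : ℝ) : ℂ) ^ (-s)
      = (b : ℂ) ^ (1 / 2 - s) * ∫ v in Set.Ioi (0:ℝ), ((v ^ 2 + 1 : ℝ) : ℂ) ^ (-s) := by
  have hq : 0 < Real.sqrt b := Real.sqrt_pos.mpr hb
  have h := integral_comp_mul_left_Ioi (fun v : ℝ => ((v ^ 2 + b : ℝ) : ℂ) ^ (-s)) 0 hq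
  rw [mul_zero] at h
  have e : ∀ v : ℝ, (((Real.sqrt b * v) ^ 2 + b : ℝ) : ℂ) ^ (-s)
      = (b : ℂ) ^ (-s) * ((v ^ 2 + 1 : ℝ) : ℂ) ^ (-s) := by
    intro v
    rw [mul_pow, Real.sq_sqrt hb.le, show b * v ^ 2 + b = b * (v ^ 2 + 1) by ring,
      Complex.ofReal_mul, Complex.mul_cpow_ofReal_nonneg hb.le (by positivity)]
  simp_rw [e] at h
  rw [integral_const_mul] at h
  have h2 : ∫ v in Set.Ioi (0:ℝ), ((v ^ 2 + b : ℝ) : ℂ) ^ (-s)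
      = (Real.sqrt b : ℂ) * ((b : ℂ) ^ (-s) * ∫ v in Set.Ioi (0:ℝ), ((v ^ 2 + 1 : ℝ) : ℂ) ^ (-s)) := by
    rw [h, Complex.real_smul, ← mul_assoc, ← Complex.ofReal_mul, mul_inv_cancel₀ hq.ne']
    simp
  rw [h2, ← mul_assoc]
  congr 1
  rw [Real.sqrt_eq_rpow, Complex.ofReal_cpow hb.le, ← Complex.cpow_add _ _ (by exact_mod_cast hb.ne')]
  congr 1
  push_cast
  ring

lemma beta_product (s : ℂ) (hs : 1 / 2 < s.re) :
    (2 * s - 1) * (Complex.betaIntegral (s - 1 / 2) (1 / 2) * Complex.betaIntegral (1 / 2) s)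
      = 2 * Real.pi := by
  have h1 : 0 < (s - 1 / 2).re := by simp; linarith
  have h2 : 0 < (1 / 2 : ℂ).re := by norm_num
  have h3 : 0 < s.re := by linarith
  have e1 := Complex.Gamma_mul_Gamma_eq_betaIntegral h1 h2
  have e2 := Complex.Gamma_mul_Gamma_eq_betaIntegral h2 h3
  rw [sub_add_cancel] at e1
  have hne : s - 1 / 2 ≠ 0 := fun h => by rw [h] at h1; simp at h1
  have e3 := Complex.Gamma_add_one _ hne
  rw [show s - 1 / 2 + 1 = 1 / 2 + s by ring] at e3
  have g1 := Complex.Gamma_ne_zero_of_re_pos h1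
  have g2 := Complex.Gamma_ne_zero_of_re_pos h3
  have g3 : Complex.Gamma (1 / 2) * Complex.Gamma (1 / 2) = Real.pi := by
    rw [Complex.Gamma_one_half_eq, ← Complex.cpow_add _ _ (by exact_mod_cast Real.pi_ne_zero)]
    norm_num
  rw [e3] at e2
  apply mul_left_cancel₀ (mul_ne_zero g1 g2)
  linear_combination (-2) * (Complex.Gamma (1 / 2) * Complex.Gamma s) * e1
    + (-2) * (Complex.Gamma s * Complex.betaIntegral (s - 1 / 2) (1 / 2)) * e2
    + 2 * Complex.Gamma (s - 1 / 2) * Complex.Gamma s * g3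

lemma integrable_v (b r : ℝ) (hb : 0 < b) (hr : 1 / 2 < r) :
    Integrable (fun v : ℝ => (v ^ 2 + b) ^ (-r)) (volume.restrict (Set.Ioi (0:ℝ))) := by
  apply Integrable.restrict
  have h := integrable_rpow_neg_one_add_norm_sq (E := ℝ) (μ := volume) (r := 2 * r)
    (by simp; linarith)
  set k := min 1 b
  have hk : 0 < k := lt_min one_pos hb
  refine (h.const_mul (k ^ (-r))).mono' ?_ (ae_of_all _ fun v => ?_)
  · apply Continuous.aestronglyMeasurable
    have : ∀ v : ℝ, v ^ 2 + b ≠ 0 := fun v => by positivity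
    exact Continuous.rpow_const (by fun_prop) fun v => Or.inl (this v)
  · rw [Real.norm_of_nonneg (by positivity), Real.norm_eq_abs, sq_abs,
      show -(2 * r) / 2 = -r by ring, ← Real.mul_rpow hk.le (by positivity)]
    apply Real.rpow_le_rpow_of_nonpos (by positivity) _ (by linarith)
    nlinarith [min_le_left 1 b, min_le_right 1 b, sq_nonneg v,
      mul_le_mul_of_nonneg_right (min_le_left 1 b) (sq_nonneg v)]

lemma fubini_int (B : ℝ) (hB : 1 < B) (s : ℂ) (hs : 1 / 2 < s.re) :
    Integrable (Function.uncurry fun (v t : ℝ) =>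
      (t : ℂ) ^ (s - 1) * ((1 : ℂ) - (t : ℂ)) ^ (s - 1) * (((v ^ 2 + B : ℝ) : ℂ) - (t : ℂ)) ^ (-s))
      ((volume.restrict (Set.Ioi (0:ℝ))).prod (volume.restrict (Set.Ioo (0:ℝ) 1))) := by
  have hb : Integrable (fun t : ℝ => (t : ℂ) ^ (s - 1) * ((1 : ℂ) - (t : ℂ)) ^ (s - 1))
      (volume.restrict (Set.Ioo (0:ℝ) 1)) := by
    have h := Complex.betaIntegral_convergent (u := s) (v := s) (by linarith) (by linarith)
    rw [intervalIntegrable_iff_integrableOn_Ioo_of_le zero_le_one] at h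
    exact h
  have hv := integrable_v (B - 1) s.re (by linarith) hs
  have hmul := hv.mul_prod hb.norm
  refine hmul.mono' ?_ ?_
  · apply Measurable.aestronglyMeasurable
    unfold Function.uncurry
    fun_prop
  · rw [Measure.prod_restrict]
    refine (ae_restrict_iff' (measurableSet_Ioi.prod measurableSet_Ioo)).mpr (ae_of_all _ ?_)
    rintro ⟨v, t⟩ ⟨hv, ht⟩
    simp only [Function.uncurry]
    have hv : 0 < v := hv
    have ht0 : 0 < t := ht.1
    have ht1 : t < 1 := ht.2
    have hp : 0 < v ^ 2 + B - t := by nlinarith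
    rw [norm_mul, mul_comm]
    apply mul_le_mul_of_nonneg_right _ (norm_nonneg _)
    rw [← Complex.ofReal_sub, Complex.norm_cpow_eq_rpow_re_of_pos hp, Complex.neg_re]
    apply Real.rpow_le_rpow_of_nonpos (by nlinarith) (by linarith) (by linarith)

lemma J_formula (a : ℝ) (ha : 0 < a) (ha1 : a < 1) (s : ℂ) (hs : 1 / 2 < s.re) :
    (2 * s - 1) * ∫ v in Set.Ioi (0:ℝ), greenH s (v ^ 2 + (1 + a) ^ 2 / (4 * a))
      = 1 / 4 * (a : ℂ) ^ (s - 1 / 2) := by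
  set B := (1 + a) ^ 2 / (4 * a) with hBdef
  have hB : 1 < B := by
    rw [hBdef, one_lt_div (by positivity)]
    nlinarith [mul_pos (sub_pos.mpr ha1) (sub_pos.mpr ha1)]
  unfold greenH
  rw [integral_const_mul, integral_integral_swap (fubini_int B hB s hs)]
  have e : ∫ t in Set.Ioo (0:ℝ) 1, ∫ v in Set.Ioi (0:ℝ),
      (t : ℂ) ^ (s - 1) * ((1 : ℂ) - (t : ℂ)) ^ (s - 1) * (((v ^ 2 + B : ℝ) : ℂ) - (t : ℂ)) ^ (-s)
      = (a : ℂ) ^ (s - 1 / 2) * Complex.betaIntegral (1 / 2) s *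
        (1 / 2 * Complex.betaIntegral (s - 1 / 2) (1 / 2)) := by
    rw [← K_formula a ha ha1 s hs, ← integral_mul_const]
    refine setIntegral_congr_fun measurableSet_Ioo fun t ht => ?_
    have hb : 0 < B - t := by linarith [ht.2]
    have e1 : ∀ v : ℝ, ((v ^ 2 + B : ℝ) : ℂ) - (t : ℂ) = ((v ^ 2 + (B - t) : ℝ) : ℂ) := fun v => by
      push_cast; ring
    simp only [e1]
    rw [integral_const_mul, C_scaled s _ hb, C_formula s hs]
    ring
  rw [e]
  have hpi : (Real.pi : ℂ) ≠ 0 := by exact_mod_cast Real.pi_ne_zero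
  have hbp := beta_product s hs
  generalize Complex.betaIntegral (s - 1 / 2) (1 / 2) = X at *
  generalize Complex.betaIntegral (1 / 2) s = Y at *
  generalize (a : ℂ) ^ (s - 1 / 2) = Z at *
  field_simp
  linear_combination Z * hbp

lemma exp_cases (ℓ : ℝ) (m : ℤ) (hm : m ≠ 0) (ε : ℝ) (hε : ε = 1 ∨ ε = -1) :
    (1 - ε * Real.exp (m * ℓ)) ^ 2 / (4 * Real.exp (m * ℓ))
      = (1 - ε * Real.exp (-(|m| : ℤ) * ℓ)) ^ 2 / (4 * Real.exp (-(|m| : ℤ) * ℓ)) ∧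
    (1 + Real.exp (m * ℓ)) ^ 2 / (4 * Real.exp (m * ℓ))
      = (1 + Real.exp (-(|m| : ℤ) * ℓ)) ^ 2 / (4 * Real.exp (-(|m| : ℤ) * ℓ)) := by
  have he : ε ^ 2 = 1 := by rcases hε with h | h <;> rw [h] <;> norm_num
  rcases lt_or_gt_of_ne hm with h | h
  · rw [abs_of_neg h]; push_cast; simp
  · rw [abs_of_pos h, neg_mul, Real.exp_neg]
    have hq := (Real.exp_pos (m * ℓ)).ne'
    generalize Real.exp (m * ℓ) = q at *
    constructor
    · field_simp
      linear_combination (q ^ 2 - 1) * he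
    · field_simp
      ring

/-- A single term in the method-of-images computation for the funnel (from the proof of
Proposition 2.3 of the paper): for `ℓ > 0`, `m ∈ ℤ \ {0}`, `ε = ±1` and `Re s > 1/2`,
`(2s-1) ∫₁^{e^ℓ} ∫₀^∞ g_s(((1-εe^{mℓ})²x² + (1+e^{mℓ})²y²)/(4e^{mℓ}y²)) y⁻² dx dy
  = (ℓ/2) e^{-s|m|ℓ}/(1 - ε e^{-|m|ℓ})`. -/
theorem funnel_image_term (ℓ : ℝ) (hl : 0 < ℓ) (m : ℤ) (hm : m ≠ 0)
    (ε : ℝ) (hε : ε = 1 ∨ ε = -1) (s : ℂ) (hs : 1 / 2 < s.re) :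
    (2 * s - 1) * ∫ y in Set.Ioo (1:ℝ) (Real.exp ℓ), ∫ x in Set.Ioi (0:ℝ),
        greenH s (((1 - ε * Real.exp (m * ℓ)) ^ 2 * x ^ 2
            + (1 + Real.exp (m * ℓ)) ^ 2 * y ^ 2) / (4 * Real.exp (m * ℓ) * y ^ 2))
          / (y : ℂ) ^ 2 =
      ((ℓ : ℂ) / 2) * Complex.exp (-s * (|m| : ℤ) * ℓ)
        / (1 - (ε : ℂ) * Complex.exp (-((|m| : ℤ) : ℂ) * ℓ)) := by
  have hmr : (0:ℝ) < (|m| : ℤ) := by exact_mod_cast abs_pos.mpr hm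
  obtain ⟨hA, hB⟩ := exp_cases ℓ m hm ε hε
  set a := Real.exp (-(|m| : ℤ) * ℓ) with ha_def
  have ha : 0 < a := Real.exp_pos _
  have ha1 : a < 1 := by
    rw [ha_def, Real.exp_lt_one_iff]
    nlinarith
  have hea : 0 < 1 - ε * a := by rcases hε with h | h <;> rw [h] <;> linarith
  set J := ∫ v in Set.Ioi (0:ℝ), greenH s (v ^ 2 + (1 + a) ^ 2 / (4 * a)) with hJ
  have hJf := J_formula a ha ha1 s hs
  rw [← hJ] at hJf
  set k := (1 - ε * a) / (2 * Real.sqrt a) with hk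
  have hsq : 0 < Real.sqrt a := Real.sqrt_pos.mpr ha
  have hkpos : 0 < k := by positivity
  have hk2 : k ^ 2 = (1 - ε * a) ^ 2 / (4 * a) := by
    rw [hk, div_pow, mul_pow, Real.sq_sqrt ha.le]; norm_num
  have hinner : ∀ y ∈ Set.Ioo (1:ℝ) (Real.exp ℓ), ∫ x in Set.Ioi (0:ℝ),
        greenH s (((1 - ε * Real.exp (m * ℓ)) ^ 2 * x ^ 2
            + (1 + Real.exp (m * ℓ)) ^ 2 * y ^ 2) / (4 * Real.exp (m * ℓ) * y ^ 2))
          / (y : ℂ) ^ 2 = ((y⁻¹ : ℝ) : ℂ) * (J / k) := by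
    intro y hy
    have hy0 : 0 < y := by linarith [hy.1]
    have hq := Real.exp_pos (m * ℓ)
    have e1 : ∀ x : ℝ, ((1 - ε * Real.exp (m * ℓ)) ^ 2 * x ^ 2
            + (1 + Real.exp (m * ℓ)) ^ 2 * y ^ 2) / (4 * Real.exp (m * ℓ) * y ^ 2)
        = ((k / y) * x) ^ 2 + (1 + a) ^ 2 / (4 * a) := by
      intro x
      rw [← hB, mul_pow, div_pow, hk2, ← hA]
      field_simp
    simp_rw [e1]
    rw [integral_div, integral_comp_mul_left_Ioi
      (fun v => greenH s (v ^ 2 + (1 + a) ^ 2 / (4 * a))) 0 (by positivity : 0 < k / y), mul_zero,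
      ← hJ, Complex.real_smul]
    have : (y : ℂ) ≠ 0 := by exact_mod_cast hy0.ne'
    have : (k : ℂ) ≠ 0 := by exact_mod_cast hkpos.ne'
    push_cast
    field_simp
  rw [setIntegral_congr_fun measurableSet_Ioo hinner, integral_mul_const, integral_complex_ofReal]
  have hlog : ∫ y in Set.Ioo (1:ℝ) (Real.exp ℓ), y⁻¹ = ℓ := by
    rw [← integral_Ioc_eq_integral_Ioo, ← intervalIntegral.integral_of_le (Real.one_le_exp hl.le),
      integral_inv_of_pos one_pos (Real.exp_pos _), div_one, Real.log_exp]
  rw [hlog]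
  have hexp1 : Complex.exp (-((|m| : ℤ) : ℂ) * ℓ) = (a : ℂ) := by
    simp only [ha_def, Complex.ofReal_exp, Complex.ofReal_mul, Complex.ofReal_neg,
      Complex.ofReal_intCast]
  have hexp2 : Complex.exp (-s * (|m| : ℤ) * ℓ)
      = (a : ℂ) ^ (s - 1 / 2) * (Real.sqrt a : ℂ) := by
    have : Real.sqrt a = Real.exp (Real.log a * (1 / 2)) := by
      rw [Real.sqrt_eq_rpow, Real.rpow_def_of_pos ha]
    rw [this, cp ha, Complex.ofReal_exp, ← Complex.exp_add, ha_def, Real.log_exp]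
    congr 1
    simp only [Complex.ofReal_mul, Complex.ofReal_neg, Complex.ofReal_intCast, Complex.ofReal_div,
      Complex.ofReal_one, Complex.ofReal_ofNat]
    ring
  rw [hexp1, hexp2]
  have h1 : (1 - (ε : ℂ) * a) ≠ 0 := by exact_mod_cast hea.ne'
  have h2 : (Real.sqrt a : ℂ) ≠ 0 := by exact_mod_cast hsq.ne'
  rw [hk]
  push_cast
  generalize (a : ℂ) ^ (s - 1 / 2) = Z at *
  field_simp
  linear_combination 4 * (ℓ : ℂ) * hJf
end

section
/- Let s be a complex number with Re(s) > 1/2. Then 4(2s−1) ∫₀^∞ g_s(1 + u²) du = 1. -/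
open MeasureTheory

lemma aux_beta_eq (u v : ℂ) : Complex.betaIntegral u v =
    ∫ x in Set.Ioo (0:ℝ) 1, (x:ℂ) ^ (u - 1) * (1 - (x:ℂ)) ^ (v - 1) := by
  rw [Complex.betaIntegral, intervalIntegral.integral_of_le zero_le_one,
    integral_Ioc_eq_integral_Ioo]

lemma aux_beta_int {u v : ℂ} (hu : 0 < u.re) (hv : 0 < v.re) :
    IntegrableOn (fun x : ℝ => (x:ℂ) ^ (u - 1) * (1 - (x:ℂ)) ^ (v - 1)) (Set.Ioo (0:ℝ) 1) := by
  have := Complex.betaIntegral_convergent hu hv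
  rw [intervalIntegrable_iff_integrableOn_Ioo_of_le zero_le_one] at this
  exact this

lemma aux_image : (fun v : ℝ => (1 + v ^ 2)⁻¹) '' Set.Ioi 0 = Set.Ioo 0 1 := by
  ext x
  constructor
  · rintro ⟨v, hv, rfl⟩
    have hv' : 0 < v := hv
    exact ⟨by positivity, inv_lt_one_of_one_lt₀ (by nlinarith [pow_pos hv' 2])⟩
  · rintro ⟨h0, h1⟩
    have h : 0 < x⁻¹ - 1 := by
      have := (one_lt_inv₀ h0).2 h1
      linarith
    refine ⟨Real.sqrt (x⁻¹ - 1), Real.sqrt_pos.2 h, ?_⟩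
    simp only
    rw [Real.sq_sqrt h.le]
    simp

lemma aux_one (s : ℂ) : ∫ v in Set.Ioi (0:ℝ), (((1 + v ^ 2 : ℝ)) : ℂ) ^ (-s) =
    Complex.betaIntegral (s - 1/2) (1/2) / 2 := by
  have key := integral_image_eq_integral_abs_deriv_smul (s := Set.Ioi (0:ℝ))
    (f := fun v : ℝ => (1 + v ^ 2)⁻¹) (f' := fun v => -(2 * v) / (1 + v ^ 2) ^ 2)
    measurableSet_Ioi (fun v _ => by
      have h : HasDerivAt (fun v : ℝ => 1 + v ^ 2) (2 * v) v := by
        simpa using (hasDerivAt_pow 2 v).const_add 1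
      exact (h.inv (by positivity)).hasDerivWithinAt)
    (by
      intro a ha b hb hab
      have ha' : 0 < a := ha
      have hb' : 0 < b := hb
      have := inv_injective hab
      nlinarith [(sq_eq_sq₀ ha'.le hb'.le).1 (by linarith)])
    (fun x : ℝ => (x:ℂ) ^ (s - 1/2 - 1) * (1 - (x:ℂ)) ^ ((1/2 : ℂ) - 1))
  rw [aux_image, ← aux_beta_eq] at key
  rw [key, eq_div_iff two_ne_zero, mul_comm, ← integral_const_mul]
  refine setIntegral_congr_fun measurableSet_Ioi fun v hv => ?_
  have hv' : 0 < v := hv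
  have hp : 0 < 1 + v ^ 2 := by positivity
  have hpc : ((1 + v ^ 2 : ℝ) : ℂ) ≠ 0 := by exact_mod_cast hp.ne'
  have hvc : (v : ℂ) ≠ 0 := by exact_mod_cast hv'.ne'
  simp only [Complex.real_smul]
  have habs : |-(2 * v) / (1 + v ^ 2) ^ 2| = 2 * v / (1 + v ^ 2) ^ 2 := by
    rw [neg_div, abs_neg, abs_of_pos (by positivity)]
  have e1 : (1 : ℂ) - (((1 + v ^ 2)⁻¹ : ℝ) : ℂ) = ((v ^ 2 * (1 + v ^ 2)⁻¹ : ℝ) : ℂ) := by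
    rw [← Complex.ofReal_one, ← Complex.ofReal_sub]
    congr 1
    field_simp
    ring
  have e2 : (((v ^ 2 : ℝ)) : ℂ) ^ ((1/2 : ℂ) - 1) = (v : ℂ)⁻¹ := by
    have : ((1/2 : ℂ) - 1) = ((-(1/2) : ℝ) : ℂ) := by push_cast; ring
    rw [this, ← Complex.ofReal_cpow (by positivity), Real.rpow_neg (by positivity),
      ← Real.sqrt_eq_rpow, Real.sqrt_sq hv'.le, Complex.ofReal_inv]
  have e3 : ∀ z : ℂ, (((1 + v ^ 2)⁻¹ : ℝ) : ℂ) ^ z = ((1 + v ^ 2 : ℝ) : ℂ) ^ (-z) := by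
    intro z
    rw [Complex.ofReal_inv, Complex.inv_cpow _ _ ?_, Complex.cpow_neg]
    rw [Complex.arg_ofReal_of_nonneg hp.le]
    exact Real.pi_pos.ne
  rw [habs, e1, Complex.ofReal_mul (v ^ 2), Complex.mul_cpow_ofReal_nonneg (by positivity)
    (by positivity), e2, e3, e3]
  have e4 : ((1 + v ^ 2 : ℝ) : ℂ) ^ (-s) * ((1 + v ^ 2 : ℝ) : ℂ) ^ 2 =
      ((1 + v ^ 2 : ℝ) : ℂ) ^ (-(s - 1/2 - 1)) * ((1 + v ^ 2 : ℝ) : ℂ) ^ (-((1/2 : ℂ) - 1)) := by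
    rw [← Complex.cpow_add _ _ hpc, ← Complex.cpow_ofNat, ← Complex.cpow_add _ _ hpc]
    congr 1
    ring
  rw [Complex.ofReal_div, Complex.ofReal_mul, Complex.ofReal_pow (1 + v ^ 2)]
  generalize ((1 + v ^ 2 : ℝ) : ℂ) = P at *
  generalize P ^ (-(s - 1/2 - 1)) = A at *
  generalize P ^ (-((1/2 : ℂ) - 1)) = B at *
  field_simp
  push_cast
  linear_combination 2 * e4

lemma aux_scale (s : ℂ) {a : ℝ} (ha : 0 < a) (v : ℝ) :
    ((a + (Real.sqrt a * v) ^ 2 : ℝ) : ℂ) ^ (-s) = (a : ℂ) ^ (-s) * ((1 + v ^ 2 : ℝ) : ℂ) ^ (-s) := by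
  rw [← Complex.mul_cpow_ofReal_nonneg ha.le (by positivity), ← Complex.ofReal_mul, mul_pow,
    Real.sq_sqrt ha.le]
  congr 2
  ring

lemma aux_inner (s : ℂ) {a : ℝ} (ha : 0 < a) :
    ∫ u in Set.Ioi (0:ℝ), ((a + u ^ 2 : ℝ) : ℂ) ^ (-s) =
      (a : ℂ) ^ (1/2 - s) * ∫ v in Set.Ioi (0:ℝ), ((1 + v ^ 2 : ℝ) : ℂ) ^ (-s) := by
  have hq := Real.sqrt_pos.2 ha
  have h := integral_comp_mul_left_Ioi (fun u : ℝ => ((a + u ^ 2 : ℝ) : ℂ) ^ (-s)) 0 hq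
  simp only [aux_scale s ha, mul_zero] at h
  rw [integral_const_mul, Complex.real_smul] at h
  have hqc : ((Real.sqrt a : ℝ) : ℂ) ≠ 0 := by exact_mod_cast hq.ne'
  have hs : ((Real.sqrt a : ℝ) : ℂ) = (a : ℂ) ^ (1/2 : ℂ) := by
    rw [Real.sqrt_eq_rpow, Complex.ofReal_cpow ha.le]; push_cast; rfl
  rw [sub_eq_add_neg, Complex.cpow_add _ _ (by exact_mod_cast ha.ne'), mul_assoc, h, ← hs,
    Complex.ofReal_inv, mul_inv_cancel_left₀ hqc]

lemma aux_inner_real (r : ℝ) {a : ℝ} (ha : 0 < a) :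
    ∫ u in Set.Ioi (0:ℝ), (a + u ^ 2) ^ (-r) =
      a ^ (1/2 - r) * ∫ v in Set.Ioi (0:ℝ), (1 + v ^ 2) ^ (-r) := by
  have h := aux_inner (r : ℂ) ha
  have e : ∀ b : ℝ, 0 < b → ∀ u : ℝ, ((b + u ^ 2 : ℝ) : ℂ) ^ (-(r:ℂ)) =
      (((b + u ^ 2) ^ (-r) : ℝ) : ℂ) := by
    intro b hb u
    rw [Complex.ofReal_cpow (by positivity), Complex.ofReal_neg]
  simp only [e a ha, e 1 one_pos] at h
  rw [integral_complex_ofReal, integral_complex_ofReal] at h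
  have e2 : (a : ℂ) ^ (1/2 - (r:ℂ)) = ((a ^ (1/2 - r) : ℝ) : ℂ) := by
    rw [Complex.ofReal_cpow ha.le]; push_cast; rfl
  rw [e2] at h
  exact_mod_cast h

lemma aux_int_real {r : ℝ} (hr : 1/2 < r) {a : ℝ} (ha : 0 < a) :
    IntegrableOn (fun u : ℝ => (a + u ^ 2) ^ (-r)) (Set.Ioi 0) := by
  by_contra hcon
  have h0 := integral_undef hcon
  rw [aux_inner_real r ha] at h0
  have hI : Integrable (fun v : ℝ => (1 + v ^ 2) ^ (-r)) := by
    have := integrable_rpow_neg_one_add_norm_sq (E := ℝ) (μ := volume) (r := 2 * r)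
      (by simp; linarith)
    refine this.congr (Filter.Eventually.of_forall fun v => ?_)
    simp only [Real.norm_eq_abs, sq_abs]
    congr 1
    ring
  have hpos : 0 < ∫ v in Set.Ioi (0:ℝ), (1 + v ^ 2) ^ (-r) := by
    rw [setIntegral_pos_iff_support_of_nonneg_ae
      (Filter.Eventually.of_forall fun v => by simp only [Pi.zero_apply]; positivity) hI.integrableOn]
    have : Function.support (fun v : ℝ => (1 + v ^ 2) ^ (-r)) = Set.univ := by
      ext v
      simp only [Function.mem_support, Set.mem_univ, iff_true]
      positivity
    rw [this]
    simp
  have : 0 < a ^ (1/2 - r) := by positivity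
  exact (mul_pos this hpos).ne' h0

/-- the two-variable integrand -/
noncomputable def auxF (s : ℂ) (u t : ℝ) : ℂ :=
  (t : ℂ) ^ (s - 1) * ((1 : ℂ) - (t : ℂ)) ^ (s - 1) * (((1 + u ^ 2 : ℝ) : ℂ) - (t : ℂ)) ^ (-s)

lemma auxF_eq (s : ℂ) (u t : ℝ) : auxF s u t =
    (t : ℂ) ^ (s - 1) * ((1 - t : ℝ) : ℂ) ^ (s - 1) * ((1 - t + u ^ 2 : ℝ) : ℂ) ^ (-s) := by
  unfold auxF
  push_cast
  congr 2
  ring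

lemma auxF_norm (s : ℂ) (u : ℝ) {t : ℝ} (ht : t ∈ Set.Ioo (0:ℝ) 1) : ‖auxF s u t‖ =
    t ^ (s.re - 1) * (1 - t) ^ (s.re - 1) * (1 - t + u ^ 2) ^ (-s.re) := by
  have h1 : 0 < 1 - t := by linarith [ht.2]
  rw [auxF_eq, norm_mul, norm_mul, Complex.norm_cpow_eq_rpow_re_of_pos ht.1,
    Complex.norm_cpow_eq_rpow_re_of_pos h1, Complex.norm_cpow_eq_rpow_re_of_pos (by positivity)]
  simp

lemma auxF_int (s : ℂ) {t : ℝ} (ht : t ∈ Set.Ioo (0:ℝ) 1) :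
    ∫ u in Set.Ioi (0:ℝ), auxF s u t = (Complex.betaIntegral (s - 1/2) (1/2) / 2) *
      ((t:ℂ) ^ (s - 1) * (1 - (t:ℂ)) ^ ((1/2:ℂ) - 1)) := by
  have h1 : 0 < 1 - t := by linarith [ht.2]
  simp only [auxF_eq]
  rw [integral_const_mul, aux_inner s h1, aux_one]
  have : (1 - (t:ℂ)) ^ ((1/2:ℂ) - 1) = ((1 - t : ℝ) : ℂ) ^ (s - 1) * ((1 - t : ℝ) : ℂ) ^ (1/2 - s) := by
    rw [← Complex.cpow_add _ _ (by exact_mod_cast h1.ne')]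
    push_cast
    congr 1
    ring
  rw [this]
  ring

lemma auxF_meas (s : ℂ) : Measurable (Function.uncurry (auxF s)) := by
  unfold auxF Function.uncurry
  fun_prop

lemma auxF_integrable (s : ℂ) (hs : 1 / 2 < s.re) :
    Integrable (Function.uncurry (auxF s))
      ((volume.restrict (Set.Ioi (0:ℝ))).prod (volume.restrict (Set.Ioo (0:ℝ) 1))) := by
  rw [integrable_prod_iff' (auxF_meas s).aestronglyMeasurable]
  constructor
  · refine (ae_restrict_mem measurableSet_Ioo).mono fun t ht => ?_
    have h1 : 0 < 1 - t := by linarith [ht.2]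
    have hm : Measurable fun u => Function.uncurry (auxF s) (u, t) :=
      (auxF_meas s).comp (measurable_id.prodMk measurable_const)
    rw [← integrable_norm_iff hm.aestronglyMeasurable]
    simp only [Function.uncurry, auxF_norm s _ ht]
    exact (aux_int_real hs h1).const_mul _
  · have hb := (aux_beta_int (u := s) (v := 1/2) (by linarith) (by norm_num)).norm.const_mul
      (∫ v in Set.Ioi (0:ℝ), (1 + v ^ 2) ^ (-s.re))
    refine hb.congr ((ae_restrict_mem measurableSet_Ioo).mono fun t ht => ?_)
    have h1 : 0 < 1 - t := by linarith [ht.2]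
    simp only [Function.uncurry, auxF_norm s _ ht]
    rw [integral_const_mul, aux_inner_real _ h1, norm_mul, Complex.norm_cpow_eq_rpow_re_of_pos ht.1]
    have : (1 - (t:ℂ)) = ((1 - t : ℝ) : ℂ) := by push_cast; rfl
    rw [this, Complex.norm_cpow_eq_rpow_re_of_pos h1]
    have e : (1 - t) ^ ((1/2:ℂ) - 1).re = (1 - t) ^ (s.re - 1) * (1 - t) ^ (1/2 - s.re) := by
      rw [← Real.rpow_add h1]
      congr 1
      norm_num
    rw [e]
    simp only [Complex.sub_re, Complex.one_re]
    ring

lemma aux_beta_prod (s : ℂ) (hs : 1 / 2 < s.re) :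
    (2 * s - 1) * (Complex.betaIntegral (s - 1/2) (1/2) * Complex.betaIntegral s (1/2)) =
      2 * Real.pi := by
  have hre : 0 < (s - 1/2).re := by
    simp only [Complex.sub_re]; norm_num; linarith
  have hre0 : 0 < s.re := by linarith
  have hh : 0 < (1/2 : ℂ).re := by norm_num
  have b1 := Complex.Gamma_mul_Gamma_eq_betaIntegral hre hh
  have b2 := Complex.Gamma_mul_Gamma_eq_betaIntegral hre0 hh
  rw [sub_add_cancel] at b1
  have hne : s - 1/2 ≠ 0 := by
    intro h; rw [h] at hre; simp at hre
  have hG := Complex.Gamma_add_one (s - 1/2) hne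
  have e : s - 1/2 + 1 = s + 1/2 := by ring
  rw [e] at hG
  have hpi : Complex.Gamma (1/2) * Complex.Gamma (1/2) = Real.pi := by
    rw [Complex.Gamma_one_half_eq, ← Complex.cpow_add _ _ (by exact_mod_cast Real.pi_pos.ne')]
    norm_num
  have n1 := Complex.Gamma_ne_zero_of_re_pos hre
  have n2 := Complex.Gamma_ne_zero_of_re_pos hre0
  rw [hG] at b2
  apply mul_left_cancel₀ (mul_ne_zero n1 n2)
  linear_combination (-2 * (s - 1/2) * Complex.Gamma (s - 1/2) * Complex.betaIntegral s (1/2)) * b1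
    - 2 * Complex.Gamma (s - 1/2) * Complex.Gamma (1/2) * b2
    + 2 * Complex.Gamma (s - 1/2) * Complex.Gamma s * hpi

/-- Equation (A.6) of the paper: for `Re s > 1/2`, `4(2s-1) ∫₀^∞ g_s(1+u²) du = 1`. -/
theorem four_mul_integral_greenH_eq_one (s : ℂ) (hs : 1 / 2 < s.re) :
    4 * (2 * s - 1) * ∫ u in Set.Ioi (0:ℝ), greenH s (1 + u ^ 2) = 1 := by
  have h : ∀ u : ℝ, greenH s (1 + u ^ 2) =
      (1 / (4 * (Real.pi : ℂ))) * ∫ t in Set.Ioo (0:ℝ) 1, auxF s u t := fun u => rfl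
  simp only [h]
  rw [integral_const_mul, integral_integral_swap (auxF_integrable s hs),
    setIntegral_congr_fun measurableSet_Ioo (fun t ht => auxF_int s ht), integral_const_mul,
    ← aux_beta_eq]
  have hpi : (Real.pi : ℂ) ≠ 0 := by exact_mod_cast Real.pi_pos.ne'
  have := aux_beta_prod s hs
  generalize Complex.betaIntegral (s - 1/2) (1/2) = A at *
  generalize Complex.betaIntegral s (1/2) = B at *
  field_simp
  linear_combination this
end

section
/- Let ℓ > 0 and let s be a complex number with Re(s) > −1. Then both of the following series converge and are equal: ∑_{m=1}^∞ e^{−(s+1)mℓ}/(1 − e^{−2mℓ}) = ∑_{k=0}^∞ e^{−(s+2k+1)ℓ}/(1 − e^{−(s+2k+1)ℓ}). -/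
theorem funnel_aux (q r : ℂ) (hq : ‖q‖ < 1) (hr : ‖r‖ < 1) :
    ∃ S : ℂ, HasSum (fun m : ℕ => q ^ (m + 1) / (1 - r ^ (m + 1))) S ∧
      HasSum (fun k : ℕ => (q * r ^ k) / (1 - q * r ^ k)) S := by
  have hF : Summable (fun p : ℕ × ℕ => q ^ (p.1 + 1) * (r ^ (p.1 + 1)) ^ p.2) := by
    have hb : Summable (fun p : ℕ × ℕ => ‖q‖ ^ p.1 * ‖r‖ ^ p.2) :=
      (summable_geometric_of_lt_one (norm_nonneg q) hq).mul_of_nonneg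
        (summable_geometric_of_lt_one (norm_nonneg r) hr)
        (fun _ => by positivity) (fun _ => by positivity)
    refine Summable.of_norm_bounded hb ?_
    rintro ⟨m, k⟩
    simp only [norm_mul, norm_pow]
    rw [← pow_mul]
    refine mul_le_mul ?_ ?_ (by positivity) (by positivity)
    · exact pow_le_pow_of_le_one (norm_nonneg q) hq.le (Nat.le_succ m)
    · exact pow_le_pow_of_le_one (norm_nonneg r) hr.le (by nlinarith)
  obtain ⟨S, hS⟩ := hF
  refine ⟨S, hS.prod_fiberwise ?_, ?_⟩
  · intro m
    have h : ‖r ^ (m + 1)‖ < 1 := by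
      rw [norm_pow]
      exact pow_lt_one₀ (norm_nonneg r) hr (Nat.succ_ne_zero m)
    simpa [div_eq_mul_inv] using (hasSum_geometric_of_norm_lt_one h).mul_left (q ^ (m + 1))
  · have hS' := (Equiv.prodComm ℕ ℕ).hasSum_iff.mpr hS
    refine hS'.prod_fiberwise ?_
    intro k
    have h : ‖q * r ^ k‖ < 1 := by
      rw [norm_mul, norm_pow]
      exact mul_lt_one_of_nonneg_of_lt_one_left (norm_nonneg q) hq
        (pow_le_one₀ (norm_nonneg r) hr.le)
    have h2 := (hasSum_geometric_of_norm_lt_one h).mul_left (q * r ^ k)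
    rw [← div_eq_mul_inv] at h2
    refine h2.congr_fun ?_ 
    intro m
    simp only [Function.comp, Equiv.prodComm_apply, Prod.swap]
    ring

/-- The series rearrangement underlying the evaluation of the regularized resolvent trace
of a hyperbolic funnel (Proposition 2.3 of the paper): for `ℓ > 0` and `Re s > -1`, both
series below converge and
`∑_{m=1}^∞ e^{-(s+1)mℓ}/(1 - e^{-2mℓ}) = ∑_{k=0}^∞ e^{-(s+2k+1)ℓ}/(1 - e^{-(s+2k+1)ℓ})`. -/
theorem funnel_series_rearrangement (ℓ : ℝ) (hl : 0 < ℓ) (s : ℂ) (hs : -1 < s.re) :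
    Summable (fun m : ℕ =>
        Complex.exp (-(s + 1) * ((m : ℂ) + 1) * ℓ)
          / (1 - Complex.exp (-2 * ((m : ℂ) + 1) * ℓ))) ∧
    Summable (fun k : ℕ =>
        Complex.exp (-(s + 2 * k + 1) * ℓ) / (1 - Complex.exp (-(s + 2 * k + 1) * ℓ))) ∧
    (∑' m : ℕ, Complex.exp (-(s + 1) * ((m : ℂ) + 1) * ℓ)
        / (1 - Complex.exp (-2 * ((m : ℂ) + 1) * ℓ))) =
      ∑' k : ℕ, Complex.exp (-(s + 2 * k + 1) * ℓ)
        / (1 - Complex.exp (-(s + 2 * k + 1) * ℓ)) := by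
  have hq : ‖Complex.exp (-(s + 1) * ℓ)‖ < 1 := by
    rw [Complex.norm_exp, Real.exp_lt_one_iff]
    simp
    nlinarith
  have hr : ‖Complex.exp (-2 * ℓ)‖ < 1 := by
    rw [Complex.norm_exp, Real.exp_lt_one_iff]
    simp
    nlinarith
  obtain ⟨S, h1, h2⟩ := funnel_aux _ _ hq hr
  have e1 : ∀ m : ℕ, Complex.exp (-(s + 1) * ((m : ℂ) + 1) * ℓ)
      = Complex.exp (-(s + 1) * ℓ) ^ (m + 1) := by
    intro m
    rw [← Complex.exp_nat_mul]
    congr 1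
    push_cast
    ring
  have e2 : ∀ m : ℕ, Complex.exp (-2 * ((m : ℂ) + 1) * ℓ)
      = Complex.exp (-2 * ℓ) ^ (m + 1) := by
    intro m
    rw [← Complex.exp_nat_mul]
    congr 1
    push_cast
    ring
  have e3 : ∀ k : ℕ, Complex.exp (-(s + 2 * k + 1) * ℓ)
      = Complex.exp (-(s + 1) * ℓ) * Complex.exp (-2 * ℓ) ^ k := by
    intro k
    rw [← Complex.exp_nat_mul, ← Complex.exp_add]
    congr 1
    ring
  simp only [e1, e2, e3]
  exact ⟨h1.summable, h2.summable, h1.tsum_eq.trans h2.tsum_eq.symm⟩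
end
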